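/- arXiv:2507.17060 — 9 statements merged into one kernel-verified Lean document; each statement's English description precedes it below -/
import Mathlib

section
/- Let X be a connected, locally compact, locally connected Hausdorff topological space and let C ⊆ X be a compact subset. Then the union of C with all bounded connected components of X \ C is compact, and X \ C has only finitely many unbounded connected components. -/
/-!
Let `L` be a compact neighbourhood of `C`. Since `X` is connected, the frontier of every component
of `X \ C` meets `C` unless `C = ∅`, so a component not contained in `L` has to cross the
frontier of `L`. That frontier is compact and covered by the components, which are open and
pairwise disjoint, so only finitely many of them cross it. Hence `C` and the bounded components lie
in a compact set, and their union is closed because the remaining components are open.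
-/

section

open Set

variable {X : Type*} [TopologicalSpace X] {C F K L U : Set X} {S : Set (Set X)}

theorem inter_frontier_nonempty_of_isPreconnected (hK : IsPreconnected K)
    (hKL : (K ∩ L).Nonempty) (hK_not : ¬K ⊆ L) : (K ∩ frontier L).Nonempty := by
  by_contra hempty
  have hfrontier : ∀ x ∈ K, x ∉ frontier L := fun x hx hxL ↦ hempty ⟨x, hx, hxL⟩
  have hinterior : (K ∩ interior L).Nonempty := by
    obtain ⟨x, hxK, hxL⟩ := hKL
    exact ⟨x, hxK, self_sdiff_frontier L ▸ ⟨hxL, hfrontier x hxK⟩⟩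
  have hclosure : closure (interior L) ∩ K ⊆ interior L := by
    rintro x ⟨hxL, hxK⟩
    rw [← closure_sdiff_frontier]
    exact ⟨closure_mono interior_subset hxL, hfrontier x hxK⟩
  exact hK_not <| (hK.subset_of_closure_inter_subset isOpen_interior hinterior hclosure).trans
    interior_subset

theorem finite_sep_inter_nonempty_of_isCompact (hF : IsCompact F) (hS : S.PairwiseDisjoint id)
    (hopen : ∀ K ∈ S, IsOpen K) (hFS : F ⊆ ⋃₀ S) : {K ∈ S | (K ∩ F).Nonempty}.Finite := by
  obtain ⟨T, hTS, hT, hFT⟩ := hF.elim_finite_subcover_image hopen (sUnion_eq_biUnion ▸ hFS)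
  refine hT.subset fun K ⟨hK, x, hxK, hxF⟩ ↦ ?_
  obtain ⟨K', hK', hxK'⟩ := mem_iUnion₂.1 (hFT hxF)
  exact hS.elim_set hK (hTS hK') x hxK hxK' ▸ hK'

/-- The set of connected components of the subspace `U`, used to argue about families of components
without choosing base points. The components are encoded as subsets of the ambient space. -/
def componentsIn (U : Set X) : Set (Set X) :=
  {K | ∃ x ∈ U, K = connectedComponentIn U x}

theorem sUnion_componentsIn : ⋃₀ componentsIn U = U := by
  refine (sUnion_subset ?_).antisymm fun x hx ↦ ⟨_, ⟨x, hx, rfl⟩, mem_connectedComponentIn hx⟩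
  rintro _ ⟨x, -, rfl⟩
  exact connectedComponentIn_subset U x

theorem pairwiseDisjoint_componentsIn : (componentsIn U).PairwiseDisjoint id := by
  rintro _ ⟨x, -, rfl⟩ _ ⟨y, -, rfl⟩ hxy
  refine disjoint_left.2 fun z hzx hzy ↦ hxy ?_
  exact (connectedComponentIn_eq hzx).trans (connectedComponentIn_eq hzy).symm

theorem isConnected_of_mem_componentsIn (hK : K ∈ componentsIn U) : IsConnected K := by
  obtain ⟨x, hx, rfl⟩ := hK
  exact isConnected_connectedComponentIn_iff.2 hx

theorem componentsIn_univ_subset [PreconnectedSpace X] : componentsIn (univ : Set X) ⊆ {univ} := by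
  rintro _ ⟨x, -, rfl⟩
  exact (connectedComponentIn_univ x).trans (PreconnectedSpace.connectedComponent_eq_univ x)

theorem closure_inter_subset_of_mem_componentsIn (hK : K ∈ componentsIn U) :
    closure K ∩ U ⊆ K := by
  obtain ⟨x, hx, rfl⟩ := hK
  have hxK := mem_connectedComponentIn hx
  have hsub : connectedComponentIn U x ⊆ closure (connectedComponentIn U x) ∩ U :=
    subset_inter subset_closure (connectedComponentIn_subset U x)
  exact (isPreconnected_connectedComponentIn.subset_closure hsub inter_subset_left)
    |>.subset_connectedComponentIn (hsub hxK) inter_subset_right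

variable [LocallyConnectedSpace X]

theorem isOpen_of_mem_componentsIn (hU : IsOpen U) (hK : K ∈ componentsIn U) : IsOpen K := by
  obtain ⟨x, -, rfl⟩ := hK
  exact hU.connectedComponentIn

theorem isClosed_union_sUnion_of_subset_componentsIn (hC : IsClosed C)
    (hS : S ⊆ componentsIn Cᶜ) : IsClosed (C ∪ ⋃₀ S) := by
  have hcompl : (C ∪ ⋃₀ S)ᶜ = ⋃₀ (componentsIn Cᶜ \ S) := by
    have hdisj : (componentsIn Cᶜ ∪ S).PairwiseDisjoint id := by
      rw [union_eq_self_of_subset_right hS]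
      exact pairwiseDisjoint_componentsIn
    have hdiff := biUnion_sdiff_biUnion_eq hdisj
    simp only [id_eq, ← sUnion_eq_biUnion, sUnion_componentsIn] at hdiff
    rw [compl_union, ← hdiff, sdiff_eq]
  rw [← isOpen_compl_iff, hcompl]
  exact isOpen_sUnion fun K hK ↦ isOpen_of_mem_componentsIn hC.isOpen_compl hK.1

theorem isCompact_union_sUnion_of_subset_componentsIn (hC : IsClosed C) (hL : IsCompact L)
    (hCL : C ⊆ L) (hS : S ⊆ componentsIn Cᶜ) (hfinite : {K ∈ S | ¬K ⊆ L}.Finite)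
    (hbounded : ∀ K ∈ S, IsCompact (closure K)) : IsCompact (C ∪ ⋃₀ S) := by
  have hcompact : IsCompact (L ∪ ⋃ K ∈ {K ∈ S | ¬K ⊆ L}, closure K) :=
    hL.union (hfinite.isCompact_biUnion fun K hK ↦ hbounded K hK.1)
  refine hcompact.of_isClosed_subset (isClosed_union_sUnion_of_subset_componentsIn hC hS) ?_
  refine union_subset (hCL.trans subset_union_left) (sUnion_subset fun K hK ↦ ?_)
  by_cases hKL : K ⊆ L
  · exact hKL.trans subset_union_left
  · have hK' : K ∈ {K ∈ S | ¬K ⊆ L} := ⟨hK, hKL⟩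
    exact subset_closure.trans <|
      (subset_biUnion_of_mem (u := closure) hK').trans subset_union_right

theorem frontier_subset_compl_of_mem_componentsIn (hU : IsOpen U) (hK : K ∈ componentsIn U) :
    frontier K ⊆ Uᶜ := by
  rw [(isOpen_of_mem_componentsIn hU hK).frontier_eq]
  exact fun x hx hxU ↦ hx.2 (closure_inter_subset_of_mem_componentsIn hK ⟨hx.1, hxU⟩)

variable [PreconnectedSpace X]

theorem inter_nonempty_of_mem_componentsIn_compl (hC : IsClosed C) (hne : C.Nonempty)
    (hU : IsOpen U) (hCU : C ⊆ U) (hK : K ∈ componentsIn Cᶜ) : (K ∩ U).Nonempty := by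
  have hK_ne_univ : K ≠ univ := by
    rintro rfl
    obtain ⟨c, hc⟩ := hne
    have hsub : univ ⊆ Cᶜ := (subset_sUnion_of_mem hK).trans_eq sUnion_componentsIn
    exact hsub (mem_univ c) hc
  obtain ⟨x, hx⟩ := nonempty_frontier_iff.2
    ⟨(isConnected_of_mem_componentsIn hK).nonempty, hK_ne_univ⟩
  have hfrontier : frontier K ⊆ C :=
    compl_compl C ▸ frontier_subset_compl_of_mem_componentsIn hC.isOpen_compl hK
  have hxU : x ∈ U := hCU (hfrontier hx)
  exact inter_comm U K ▸ mem_closure_iff.1 (frontier_subset_closure hx) U hU hxU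

theorem finite_componentsIn_compl_not_subset (hC : IsClosed C)
    (hL : IsCompact (frontier L)) (hCL : C ⊆ interior L) :
    {K ∈ componentsIn Cᶜ | ¬K ⊆ L}.Finite := by
  obtain rfl | hne := C.eq_empty_or_nonempty
  · rw [compl_empty]
    exact (finite_singleton univ).subset ((sep_subset _ _).trans componentsIn_univ_subset)
  have hfrontier : frontier L ⊆ ⋃₀ componentsIn Cᶜ := by
    rw [sUnion_componentsIn]
    exact fun x hx hxC ↦ hx.2 (hCL hxC)
  have hmeets : ∀ K ∈ componentsIn Cᶜ, (K ∩ L).Nonempty := fun K hK ↦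
    (inter_nonempty_of_mem_componentsIn_compl hC hne isOpen_interior hCL hK).mono
      (inter_subset_inter_right K interior_subset)
  refine (finite_sep_inter_nonempty_of_isCompact hL pairwiseDisjoint_componentsIn
    (fun K ↦ isOpen_of_mem_componentsIn hC.isOpen_compl) hfrontier).subset ?_
  exact fun K ⟨hK, hKL⟩ ↦ ⟨hK, inter_frontier_nonempty_of_isPreconnected
    (isConnected_of_mem_componentsIn hK).isPreconnected (hmeets K hK) hKL⟩

theorem stmt0_general (hC : IsClosed C) (hL : IsCompact L) (hLclosed : IsClosed L)
    (hCL : C ⊆ interior L) :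
    IsCompact (C ∪ ⋃₀ {K | (∃ x ∈ Cᶜ, K = connectedComponentIn Cᶜ x) ∧
        IsCompact (closure K)}) ∧
    {K | (∃ x ∈ Cᶜ, K = connectedComponentIn Cᶜ x) ∧ ¬IsCompact (closure K)}.Finite := by
  have hfrontier : IsCompact (frontier L) :=
    hL.of_isClosed_subset isClosed_frontier hLclosed.frontier_subset
  have hfinite := finite_componentsIn_compl_not_subset hC hfrontier hCL
  refine ⟨isCompact_union_sUnion_of_subset_componentsIn hC hL (hCL.trans interior_subset)
    (sep_subset _ _) (hfinite.subset fun K hK ↦ ⟨hK.1.1, hK.2⟩) fun K hK ↦ hK.2, ?_⟩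
  refine hfinite.subset ?_
  exact fun K ⟨hK, hunbounded⟩ ↦ ⟨hK, fun hKL ↦ hunbounded <|
    hL.of_isClosed_subset isClosed_closure (closure_minimal hKL hLclosed)⟩

end

/-- If `X` is a connected, locally compact, locally connected Hausdorff
space and `C ⊆ X` is compact, then `C` together with all bounded components of `X \ C`
is compact, and `X \ C` has only finitely many unbounded components.  Here a set is
bounded when its closure is compact, and the components of `X \ C` are the sets
`connectedComponentIn Cᶜ x` for `x ∈ Cᶜ`. -/
theorem stmt0 {X : Type*} [TopologicalSpace X] [ConnectedSpace X]
    [LocallyCompactSpace X] [LocallyConnectedSpace X] [T2Space X]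
    {C : Set X} (hC : IsCompact C) :
    IsCompact (C ∪ ⋃₀ {K : Set X | (∃ x ∈ Cᶜ, K = connectedComponentIn Cᶜ x) ∧
        IsCompact (closure K)}) ∧
    {K : Set X | (∃ x ∈ Cᶜ, K = connectedComponentIn Cᶜ x) ∧
        ¬ IsCompact (closure K)}.Finite := by
  obtain ⟨L, hL, hCL⟩ := exists_compact_superset hC
  exact stmt0_general hC.isClosed hL hL.isClosed hCL
end

section
/- Let Γ be a connected, locally finite simple graph on an infinite vertex set V, and suppose a group acts transitively on V by graph automorphisms (for each pair of vertices u, v there is an automorphism of Γ carrying u to v). Then through every vertex v of Γ there is a geodesic line: a map l : ℤ → V with l 0 = v and Γ.dist (l m) (l n) = |m − n| for all m, n ∈ ℤ. -/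
/-!
Local finiteness makes balls finite, so an infinite connected locally finite graph contains geodesic
segments of every length starting at `v`. An automorphism carrying the midpoint of a segment of
length `2k` to `v` turns it into a segment of radius `k` centred at `v`. At time `z` all these
segments lie in the finite sphere of radius `|z|` about `v`, so by compactness (Rado's selection
principle) they can be glued to a line.
-/

open Set SimpleGraph

section

variable {V W : Type*} {Γ : SimpleGraph V} {Δ : SimpleGraph W} {u v w : V}

theorem edist_hom_le (φ : Γ →g Δ) (u v : V) : Δ.edist (φ u) (φ v) ≤ Γ.edist u v :=
  le_iInf fun p ↦ (edist_le (p.map φ)).trans_eq (by rw [Walk.length_map])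

theorem edist_iso (φ : Γ ≃g Δ) (u v : V) : Δ.edist (φ u) (φ v) = Γ.edist u v := by
  refine (edist_hom_le φ.toHom u v).antisymm ?_
  simpa using edist_hom_le φ.symm.toHom (φ u) (φ v)

theorem dist_iso (φ : Γ ≃g Δ) (u v : V) : Δ.dist (φ u) (φ v) = Γ.dist u v :=
  congrArg ENat.toNat (edist_iso φ u v)

theorem ball_add_one_subset_insert_biUnion_neighborSet (Γ : SimpleGraph V) (v : V) (n : ℕ) :
    Γ.ball v (n + 1) ⊆ insert v (⋃ u ∈ Γ.neighborSet v, Γ.ball u n) := by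
  intro w hw
  rw [mem_ball_comm, mem_ball] at hw
  obtain ⟨p, hp⟩ := exists_walk_of_edist_ne_top hw.ne_top
  rw [← hp] at hw
  cases p with
  | nil => exact mem_insert _ _
  | cons hadj q =>
    refine mem_insert_of_mem _ (mem_biUnion hadj (mem_ball_comm.2 ?_))
    exact (edist_le q).trans_lt (by simpa using hw)

theorem finite_ball (Γ : SimpleGraph V) [Γ.LocallyFinite] (v : V) (n : ℕ) :
    (Γ.ball v n).Finite := by
  induction n generalizing v with
  | zero => simp
  | succ n ih =>
    have hunion : (⋃ u ∈ Γ.neighborSet v, Γ.ball u n).Finite :=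
      (Γ.neighborSet v).toFinite.biUnion fun u _ ↦ ih u
    exact_mod_cast (hunion.insert v).subset (ball_add_one_subset_insert_biUnion_neighborSet Γ v n)

theorem exists_le_dist [Infinite V] [Γ.LocallyFinite] (hΓ : Γ.Preconnected) (v : V) (n : ℕ) :
    ∃ w, n ≤ Γ.dist v w := by
  obtain ⟨w, hw⟩ := (finite_ball Γ v n).exists_notMem
  rw [mem_ball_comm, mem_ball, not_lt, ← (hΓ v w).coe_dist_eq_edist] at hw
  exact ⟨w, mod_cast hw⟩

theorem dist_getVert_getVert {p : Γ.Walk u w} (hp : p.length = Γ.dist u w) {i j : ℕ}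
    (hij : i ≤ j) (hj : j ≤ p.length) : Γ.dist (p.getVert i) (p.getVert j) = j - i := by
  have hsub : ((p.drop i).take (j - i)).IsSubwalk p :=
    ((p.drop i).isSubwalk_take _).trans (p.isSubwalk_drop i)
  have hdist := length_eq_dist_of_subwalk hp hsub
  rw [Walk.take_length, Walk.drop_length, Walk.drop_getVert, Nat.add_sub_cancel' hij] at hdist
  omega

/-- The map `f` is geodesic on the set of times `S`: it embeds `S` isometrically into `Γ` with its
graph distance. Geodesic segments (`S` an interval) and geodesic lines (`S = univ`) are both
encoded by total maps `ℤ → V`, with arbitrary values outside `S`. -/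
def IsGeodesicOn (Γ : SimpleGraph V) (f : ℤ → V) (S : Set ℤ) : Prop :=
  ∀ ⦃m⦄, m ∈ S → ∀ ⦃n⦄, n ∈ S → (Γ.dist (f m) (f n) : ℤ) = |m - n|

namespace IsGeodesicOn

variable {f : ℤ → V} {S T : Set ℤ}

theorem of_le (h : ∀ m ∈ S, ∀ n ∈ S, m ≤ n → (Γ.dist (f m) (f n) : ℤ) = n - m) :
    IsGeodesicOn Γ f S := by
  intro m hm n hn
  rcases le_total m n with hmn | hnm
  · rw [h m hm n hn hmn, abs_sub_comm, abs_of_nonneg (sub_nonneg.2 hmn)]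
  · rw [Γ.dist_comm, h n hn m hm hnm, abs_of_nonneg (sub_nonneg.2 hnm)]

theorem mono (hf : IsGeodesicOn Γ f T) (hST : S ⊆ T) : IsGeodesicOn Γ f S :=
  fun _ hm _ hn ↦ hf (hST hm) (hST hn)

theorem comp_add_right (hf : IsGeodesicOn Γ f S) (k : ℤ) :
    IsGeodesicOn Γ (fun z ↦ f (z + k)) ((· + k) ⁻¹' S) :=
  fun m hm n hn ↦ by rw [hf hm hn, add_sub_add_right_eq_sub]

theorem iso_comp (hf : IsGeodesicOn Γ f S) (φ : Γ ≃g Δ) : IsGeodesicOn Δ (φ ∘ f) S :=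
  fun m hm n hn ↦ by rw [Function.comp_apply, Function.comp_apply, dist_iso, hf hm hn]

theorem edist_eq (hf : IsGeodesicOn Γ f S) {m n : ℤ} (hm : m ∈ S) (hn : n ∈ S) :
    Γ.edist (f m) (f n) = (m - n).natAbs := by
  rcases eq_or_ne m n with rfl | hmn
  · simp
  · have hdist : Γ.dist (f m) (f n) = (m - n).natAbs := by
      rw [← Nat.cast_inj (R := ℤ), hf hm hn, Int.natCast_natAbs]
    have hreach : Γ.Reachable (f m) (f n) :=
      .of_dist_ne_zero (hdist ▸ Int.natAbs_sub_ne_zero_iff.2 hmn)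
    rw [← hreach.coe_dist_eq_edist, hdist]

end IsGeodesicOn

theorem isGeodesicOn_getVert {p : Γ.Walk u w} (hp : p.length = Γ.dist u w) :
    IsGeodesicOn Γ (fun z ↦ p.getVert z.toNat) (Icc 0 p.length) := by
  refine .of_le fun m hm n hn hmn ↦ ?_
  obtain ⟨hm₀, -⟩ := hm
  obtain ⟨-, hn₁⟩ := hn
  rw [dist_getVert_getVert hp (Int.toNat_le_toNat hmn) (Int.toNat_le.2 hn₁)]
  omega

theorem exists_isGeodesicOn_Icc [Infinite V] [Γ.LocallyFinite] (hΓ : Γ.Preconnected)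
    (hv : ∀ u, ∃ φ : Γ ≃g Γ, φ u = v) (k : ℕ) :
    ∃ f : ℤ → V, f 0 = v ∧ IsGeodesicOn Γ f (Icc (-k) k) := by
  obtain ⟨w, hw⟩ := exists_le_dist hΓ v (2 * k)
  obtain ⟨p, hp⟩ := (hΓ v w).exists_walk_length_eq_dist
  obtain ⟨φ, hφ⟩ := hv (p.getVert k)
  refine ⟨φ ∘ fun z ↦ p.getVert (z + k).toNat, by simpa using hφ, ?_⟩
  refine (((isGeodesicOn_getVert hp).comp_add_right k).mono ?_).iso_comp φ
  rintro z ⟨hz₀, hz₁⟩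
  rw [mem_preimage, mem_Icc]
  omega

theorem exists_eqOn_of_finite {α β : Type*} {B : α → Set β} (hB : ∀ a, (B a).Finite)
    (f : Finset α → α → β) (hf : ∀ s, ∀ a ∈ s, f s a ∈ B a) :
    ∃ g : α → β, ∀ s : Finset α, ∃ t : Finset α, s ⊆ t ∧ EqOn g (f t) s := by
  have (a : α) : Finite (B a) := hB a
  obtain ⟨g, hg⟩ := Finset.rado_selection_subtype (β := fun a ↦ B a)
    fun s a ↦ ⟨f s a, hf s a a.2⟩
  refine ⟨fun a ↦ g a, fun s ↦ ?_⟩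
  obtain ⟨t, hst, hgt⟩ := hg s
  exact ⟨t, hst, fun a ha ↦ congrArg Subtype.val (hgt ⟨a, ha⟩)⟩

theorem exists_isGeodesicOn_univ [Γ.LocallyFinite]
    (h : ∀ s : Finset ℤ, ∃ f : ℤ → V, f 0 = v ∧ IsGeodesicOn Γ f s) :
    ∃ l : ℤ → V, l 0 = v ∧ IsGeodesicOn Γ l univ := by
  choose f hf₀ hf using fun s : Finset ℤ ↦ h (insert 0 s)
  have hball (s : Finset ℤ) (z : ℤ) (hz : z ∈ s) : f s z ∈ Γ.ball v (z.natAbs + 1 : ℕ) := by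
    have hedist := (hf s).edist_eq (Finset.mem_insert_of_mem hz) (Finset.mem_insert_self 0 s)
    rw [hf₀, sub_zero] at hedist
    rw [mem_ball, hedist]
    exact_mod_cast z.natAbs.lt_succ_self
  obtain ⟨l, hl⟩ := exists_eqOn_of_finite (fun z : ℤ ↦ finite_ball Γ v (z.natAbs + 1)) f hball
  refine ⟨l, ?_, fun m _ n _ ↦ ?_⟩
  · obtain ⟨t, -, hlt⟩ := hl {0}
    rw [hlt (by simp), hf₀]
  · obtain ⟨t, hst, hlt⟩ := hl {m, n}
    rw [hlt (by simp), hlt (by simp)]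
    exact hf t (Finset.mem_insert_of_mem (hst (by simp)))
      (Finset.mem_insert_of_mem (hst (by simp)))

theorem exists_subset_Icc_neg (s : Finset ℤ) : ∃ k : ℕ, (s : Set ℤ) ⊆ Icc (-k) k := by
  refine ⟨s.sup Int.natAbs, fun z hz ↦ ?_⟩
  have hle : z.natAbs ≤ s.sup Int.natAbs := Finset.le_sup hz
  exact ⟨by omega, by omega⟩

end

/-- If a group acts transitively by automorphisms on a connected,
locally finite graph `Γ` with infinitely many vertices, then through every vertex of `Γ`
there is a geodesic line `l : ℤ → V`. -/
theorem stmt2 {V : Type*} [Infinite V] (Γ : SimpleGraph V)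
    (hconn : Γ.Connected) (hlf : Γ.LocallyFinite)
    (htrans : ∀ u v : V, ∃ φ : Γ ≃g Γ, φ u = v) (v : V) :
    ∃ l : ℤ → V, l 0 = v ∧ ∀ m n : ℤ, (Γ.dist (l m) (l n) : ℤ) = |m - n| := by
  have hfinite (s : Finset ℤ) : ∃ f : ℤ → V, f 0 = v ∧ IsGeodesicOn Γ f s := by
    obtain ⟨k, hk⟩ := exists_subset_Icc_neg s
    obtain ⟨f, hf₀, hf⟩ := exists_isGeodesicOn_Icc hconn.preconnected (fun u ↦ htrans u v) k
    exact ⟨f, hf₀, hf.mono hk⟩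
  obtain ⟨l, hl₀, hl⟩ := exists_isGeodesicOn_univ hfinite
  exact ⟨l, hl₀, fun m n ↦ hl (mem_univ m) (mem_univ n)⟩
end

section
/- Let Γ be a connected, locally finite simple graph on vertex set V and let l : ℤ → V be a geodesic line, i.e. Γ.dist (l m) (l n) = |m − n| for all m, n ∈ ℤ. If there exists k > 0 such that every vertex of Γ is within distance k of the image of l, then Γ has exactly two ends, i.e. the cardinality of the set of ends of Γ equals 2. -/
/-!
For a finite vertex set `K`, a tail of a proper ray stays inside one component of the complement
of `K`; these components form an end. The two halves of a geodesic line give two such ends.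

At most two ends: given an end and a finite `K`, pick a vertex of the component it assigns to `K`
that is far from `K`. A short path joins it to the line without meeting `K`, so that component
contains points of the line arbitrarily far out, hence agrees with one of the two chosen ends.

At least two ends: two points of a geodesic line, on different sides of `l 0`, which are close to
each other are close to `l 0`. So the neighbourhood of the positive half-line can only be left
through a ball around `l 0`, and removing this ball separates the two halves.
-/

open Filter SimpleGraph Opposite CategoryTheory

namespace GeodesicLineEnds

variable {V ι : Type*} {Γ : SimpleGraph V}

section Distance

theorem exists_adj_dist_le_of_dist_eq_succ {v w : V} {n : ℕ} (h : Γ.dist v w = n + 1) :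
    ∃ u, Γ.Adj u w ∧ Γ.dist v u ≤ n := by
  have hne : Γ.dist w v ≠ 0 := by rw [dist_comm, h]; exact n.succ_ne_zero
  obtain ⟨p, hp⟩ := exists_walk_of_dist_ne_zero hne
  cases p with
  | nil => simp at h
  | @cons _ u _ hwu q =>
    refine ⟨u, hwu.symm, ?_⟩
    have hq : q.length + 1 = n + 1 := by rw [← h, dist_comm, ← hp, Walk.length_cons]
    have huv : Γ.dist u v ≤ q.length := dist_le q
    rw [dist_comm]
    omega

theorem finite_setOf_dist_le (hconn : Γ.Connected) [Γ.LocallyFinite] (v : V) (n : ℕ) :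
    {w | Γ.dist v w ≤ n}.Finite := by
  induction n with
  | zero =>
    refine (Set.finite_singleton v).subset fun w hw => ?_
    exact (hconn.dist_eq_zero_iff.mp (Nat.le_zero.mp hw)).symm
  | succ n ih =>
    refine (ih.union (ih.biUnion fun u _ => (Γ.neighborSet u).toFinite)).subset fun w hw => ?_
    rcases Nat.le_succ_iff.mp hw with hle | heq
    · exact Or.inl hle
    · obtain ⟨u, huw, hu⟩ := exists_adj_dist_le_of_dist_eq_succ heq
      exact Or.inr (Set.mem_biUnion hu huw)

theorem finite_setOf_exists_dist_le (hconn : Γ.Connected) [Γ.LocallyFinite] {S : Set V}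
    (hS : S.Finite) (n : ℕ) : {w | ∃ v ∈ S, Γ.dist v w ≤ n}.Finite :=
  (hS.biUnion fun v _ => finite_setOf_dist_le hconn v n).subset fun _ ⟨_, hv, hw⟩ =>
    Set.mem_biUnion hv hw

end Distance

section Components

variable {K : Set V} {C D : Γ.ComponentCompl K} {v w : V}

theorem component_eq_of_mem_of_mem (hC : v ∈ C) (hD : v ∈ D) : C = D :=
  hC.choose_spec.symm.trans hD.choose_spec

theorem mem_component_of_walk (hv : v ∈ C) (p : Γ.Walk v w) (hp : ∀ u ∈ p.support, u ∉ K) :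
    w ∈ C := by
  induction p with
  | nil => exact hv
  | @cons v u w hvu q ih =>
    have hq : ∀ x ∈ q.support, x ∉ K := fun x hx => hp x (List.mem_cons_of_mem v hx)
    exact ih (ComponentCompl.mem_of_adj v u hv (hq u q.start_mem_support) hvu) hq

theorem mem_component_of_dist_le (hconn : Γ.Connected) {n : ℕ} (hv : v ∈ C)
    (hK : ∀ u ∈ K, n < Γ.dist u v) (hw : Γ.dist v w ≤ n) : w ∈ C := by
  classical
  obtain ⟨p, hp⟩ := hconn.exists_walk_length_eq_dist v w
  refine mem_component_of_walk hv p fun u hu huK => (hK u huK).not_ge ?_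
  calc
    Γ.dist u v = Γ.dist v u := dist_comm
    _ ≤ (p.takeUntil u hu).length := dist_le _
    _ ≤ p.length := p.length_takeUntil_le_length hu
    _ ≤ n := hp ▸ hw

theorem component_subset_of_forall_adj {A : Set V} (hvC : v ∈ C) (hvA : v ∈ A)
    (hA : ∀ x ∈ A, x ∉ K → ∀ y ∉ K, Γ.Adj x y → y ∈ A) : (C : Set V) ⊆ A := by
  rintro w ⟨hwK, hwC⟩
  obtain ⟨hvK, rfl⟩ := hvC
  obtain ⟨p⟩ := ConnectedComponent.exact hwC.symm
  by_contra hwA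
  obtain ⟨d, -, hdA, hdA'⟩ := p.exists_boundary_dart (Subtype.val ⁻¹' A) hvA hwA
  exact hdA' (hA _ hdA d.fst.2 _ d.snd.2 d.adj)

end Components

section Ends

/-- The component of the complement of the finite set `K` in which the end `e` lies. -/
def endComponent (e : Γ.end) (K : Finset V) : Γ.ComponentCompl (K : Set V) :=
  e.1 (op K)

theorem endComponent_injective : Function.Injective (endComponent (Γ := Γ)) := fun _ _ h =>
  Subtype.ext (funext fun K => congrFun h K.unop)

theorem hom_endComponent (e : Γ.end) {K L : Finset V} (h : K ⊆ L) :
    (endComponent e L).hom (Finset.coe_subset.mpr h) = endComponent e K :=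
  e.2 (opHomOfLE h : op L ⟶ op K)

theorem endComponent_eq_of_subset {e f : Γ.end} {K L : Finset V} (h : K ⊆ L)
    (hL : endComponent e L = endComponent f L) : endComponent e K = endComponent f K := by
  rw [← hom_endComponent e h, hL, hom_endComponent f h]

theorem eq_or_eq_of_forall_endComponent {e f g : Γ.end}
    (h : ∀ K, endComponent e K = endComponent f K ∨ endComponent e K = endComponent g K) :
    e = f ∨ e = g := by
  classical
  by_contra! ⟨hf, hg⟩
  obtain ⟨K, hK⟩ := Function.ne_iff.mp (endComponent_injective.ne hf)
  obtain ⟨L, hL⟩ := Function.ne_iff.mp (endComponent_injective.ne hg)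
  rcases h (K ∪ L) with hKL | hKL
  · exact hK (endComponent_eq_of_subset Finset.subset_union_left hKL)
  · exact hL (endComponent_eq_of_subset Finset.subset_union_right hKL)

theorem exists_mem_endComponent_notMem (e : Γ.end) (K : Finset V) {S : Set V} (hS : S.Finite) :
    ∃ v ∈ endComponent e K, v ∉ S := by
  classical
  have hKL : K ⊆ K ∪ hS.toFinset := Finset.subset_union_left
  obtain ⟨v, hv⟩ := (endComponent e (K ∪ hS.toFinset)).nonempty
  refine ⟨v, ?_, fun hvS => ComponentCompl.notMem_of_mem hv ?_⟩
  · rw [← hom_endComponent e hKL]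
    exact ComponentCompl.subset_hom _ _ hv
  · exact Finset.mem_coe.mpr (Finset.mem_union_right K (hS.mem_toFinset.mpr hvS))

theorem frequently_mem_endComponent (hconn : Γ.Connected) [Γ.LocallyFinite] {l : ι → V} {k : ℕ}
    (hcover : ∀ v, ∃ i, Γ.dist v (l i) ≤ k) (e : Γ.end) (K : Finset V) :
    ∃ᶠ i in cofinite, l i ∈ endComponent e K := by
  refine frequently_cofinite_iff_infinite.mpr fun hfin => ?_
  have hS : ((K : Set V) ∪ l '' {i | l i ∈ endComponent e K}).Finite :=
    K.finite_toSet.union (hfin.image l)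
  obtain ⟨v, hve, hvS⟩ :=
    exists_mem_endComponent_notMem e K (finite_setOf_exists_dist_le hconn hS k)
  have hfar : ∀ u ∈ (K : Set V) ∪ l '' {i | l i ∈ endComponent e K}, k < Γ.dist u v :=
    fun u hu => not_le.mp fun hle => hvS ⟨u, hu, hle⟩
  obtain ⟨i, hi⟩ := hcover v
  have hie : l i ∈ endComponent e K :=
    mem_component_of_dist_le hconn hve (fun u hu => hfar u (Or.inl hu)) hi
  exact (hfar (l i) (Or.inr ⟨i, hie, rfl⟩)).not_ge (dist_comm.trans_le hi)

end Ends

section Rays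

/-- A proper ray: consecutive vertices are adjacent and every finite set of vertices is eventually
left for good. The index type is an order such as `ℕ` or `ℤ`; only the behaviour of `r` at
`+∞` matters, so a line indexed by `ℤ` is regarded as a ray through its positive half. -/
structure IsProperRay [Preorder ι] [SuccOrder ι] (Γ : SimpleGraph V) (r : ι → V) : Prop where
  adj_succ (i : ι) : Γ.Adj (r i) (r (Order.succ i))
  tendsto_cofinite : Tendsto r atTop cofinite

namespace IsProperRay

variable [LinearOrder ι] [SuccOrder ι] [IsSuccArchimedean ι] [Nonempty ι] {r : ι → V}

theorem exists_component_eventually_mem (hr : IsProperRay Γ r) (K : Finset V) :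
    ∃ C : Γ.ComponentCompl (K : Set V), ∀ᶠ i in atTop, r i ∈ C := by
  obtain ⟨N, hN⟩ :=
    eventually_atTop.mp (hr.tendsto_cofinite.eventually K.eventually_cofinite_notMem)
  refine ⟨Γ.componentComplMk (hN N le_rfl), eventually_atTop.mpr ⟨N, fun i hi => ?_⟩⟩
  induction hi using Succ.rec with
  | rfl => exact Γ.componentComplMk_mem _
  | @succ i hi ih =>
    exact ComponentCompl.mem_of_adj _ _ ih (hN _ (hi.trans (Order.le_succ i))) (hr.adj_succ i)

/-- The end to which a proper ray converges: it assigns to `K` the component of the complement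
of `K` containing a tail of the ray. -/
noncomputable def toEnd (hr : IsProperRay Γ r) : Γ.end :=
  ⟨fun K => (hr.exists_component_eventually_mem K.unop).choose, fun {L K} f => by
    obtain ⟨i, hiL, hiK⟩ := ((hr.exists_component_eventually_mem L.unop).choose_spec.and
      (hr.exists_component_eventually_mem K.unop).choose_spec).exists
    exact component_eq_of_mem_of_mem (ComponentCompl.subset_hom _ (le_of_op_hom f) hiL) hiK⟩

theorem eventually_mem_toEnd (hr : IsProperRay Γ r) (K : Finset V) :
    ∀ᶠ i in atTop, r i ∈ endComponent hr.toEnd K :=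
  (hr.exists_component_eventually_mem K).choose_spec

end IsProperRay

end Rays

/-- A geodesic line: an isometric embedding of `ℤ` into the vertices of `Γ`. -/
def IsGeodesicLine (Γ : SimpleGraph V) (l : ℤ → V) : Prop :=
  ∀ m n : ℤ, (Γ.dist (l m) (l n) : ℤ) = |m - n|

namespace IsGeodesicLine

variable {l : ℤ → V}

theorem injective (hl : IsGeodesicLine Γ l) : Function.Injective l := fun m n hmn => by
  have h : |m - n| = 0 := by rw [← hl m n, hmn, dist_self, Nat.cast_zero]
  exact sub_eq_zero.mp (abs_eq_zero.mp h)

theorem comp_neg (hl : IsGeodesicLine Γ l) : IsGeodesicLine Γ fun m => l (-m) := fun m n => by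
  rw [hl, neg_sub_neg, abs_sub_comm]

theorem isProperRay (hl : IsGeodesicLine Γ l) : IsProperRay Γ l where
  adj_succ m := by
    rw [← dist_eq_one_iff_adj, ← Nat.cast_inj (R := ℤ), hl, Order.succ_eq_add_one]
    simp
  tendsto_cofinite := hl.injective.tendsto_cofinite.mono_left atTop_le_cofinite

/-- The end to which `l m` converges as `m → +∞`. -/
noncomputable def forwardEnd (hl : IsGeodesicLine Γ l) : Γ.end :=
  hl.isProperRay.toEnd

/-- The end to which `l m` converges as `m → -∞`. -/
noncomputable def backwardEnd (hl : IsGeodesicLine Γ l) : Γ.end :=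
  hl.comp_neg.forwardEnd

theorem eventually_mem_forwardEnd (hl : IsGeodesicLine Γ l) (K : Finset V) :
    ∀ᶠ m in atTop, l m ∈ endComponent hl.forwardEnd K :=
  hl.isProperRay.eventually_mem_toEnd K

theorem eventually_mem_backwardEnd (hl : IsGeodesicLine Γ l) (K : Finset V) :
    ∀ᶠ m in atBot, l m ∈ endComponent hl.backwardEnd K := by
  filter_upwards [tendsto_neg_atBot_atTop.eventually (hl.comp_neg.eventually_mem_forwardEnd K)]
    with m hm
  rwa [neg_neg] at hm

theorem eq_forwardEnd_or_eq_backwardEnd (hl : IsGeodesicLine Γ l) (hconn : Γ.Connected)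
    [Γ.LocallyFinite] {k : ℕ} (hcover : ∀ v, ∃ m, Γ.dist v (l m) ≤ k) (e : Γ.end) :
    e = hl.forwardEnd ∨ e = hl.backwardEnd := by
  refine eq_or_eq_of_forall_endComponent fun K => ?_
  have hfreq := frequently_mem_endComponent hconn hcover e K
  rw [Int.cofinite_eq, frequently_sup] at hfreq
  rcases hfreq with hbot | htop
  · obtain ⟨m, hme, hm⟩ := (hbot.and_eventually (hl.eventually_mem_backwardEnd K)).exists
    exact Or.inr (component_eq_of_mem_of_mem hme hm)
  · obtain ⟨m, hme, hm⟩ := (htop.and_eventually (hl.eventually_mem_forwardEnd K)).exists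
    exact Or.inl (component_eq_of_mem_of_mem hme hm)

theorem dist_zero_le_of_dist_le_of_adj (hl : IsGeodesicLine Γ l) (hconn : Γ.Connected) {k : ℕ}
    {m n : ℤ} (hm : 0 ≤ m) (hn : n ≤ 0) {v w : V} (hvw : Γ.Adj v w) (hv : Γ.dist v (l m) ≤ k)
    (hw : Γ.dist w (l n) ≤ k) : Γ.dist (l 0) v ≤ 3 * k + 1 := by
  have hmn : m - n ≤ 2 * k + 1 := by
    have hdist : Γ.dist (l m) (l n) ≤ k + (1 + k) :=
      calc
        Γ.dist (l m) (l n) ≤ Γ.dist (l m) v + Γ.dist v (l n) := hconn.dist_triangle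
        _ ≤ Γ.dist (l m) v + (Γ.dist v w + Γ.dist w (l n)) := by
          gcongr; exact hconn.dist_triangle
        _ ≤ k + (1 + k) := by
          gcongr
          · rwa [dist_comm]
          · exact (dist_eq_one_iff_adj.mpr hvw).le
    have := hl m n
    rw [abs_of_nonneg (by omega)] at this
    omega
  have h0m : Γ.dist (l 0) (l m) ≤ 2 * k + 1 := by
    have := hl 0 m
    rw [zero_sub, abs_neg, abs_of_nonneg hm] at this
    omega
  calc
    Γ.dist (l 0) v ≤ Γ.dist (l 0) (l m) + Γ.dist (l m) v := hconn.dist_triangle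
    _ ≤ (2 * k + 1) + k := by gcongr; rwa [dist_comm]
    _ = 3 * k + 1 := by ring

theorem forwardEnd_ne_backwardEnd (hl : IsGeodesicLine Γ l) (hconn : Γ.Connected)
    [Γ.LocallyFinite] {k : ℕ} (hcover : ∀ v, ∃ m, Γ.dist v (l m) ≤ k) :
    hl.forwardEnd ≠ hl.backwardEnd := by
  intro heq
  let K : Finset V := (finite_setOf_dist_le hconn (l 0) (3 * k + 1)).toFinset
  let A : Set V := {v | ∃ m : ℤ, 0 ≤ m ∧ Γ.dist v (l m) ≤ k}
  have hA : ∀ v ∈ A, v ∉ (K : Set V) → ∀ w ∉ (K : Set V), Γ.Adj v w → w ∈ A := by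
    rintro v ⟨m, hm, hvm⟩ hvK w - hvw
    obtain ⟨n, hwn⟩ := hcover w
    refine ⟨n, ?_, hwn⟩
    by_contra! hn
    exact hvK (by
      simpa [K] using hl.dist_zero_le_of_dist_le_of_adj hconn hm hn.le hvw hvm hwn)
  obtain ⟨m, hmC, hm⟩ := ((hl.eventually_mem_forwardEnd K).and (eventually_ge_atTop 0)).exists
  have hCA : (endComponent hl.forwardEnd K : Set V) ⊆ A :=
    component_subset_of_forall_adj hmC ⟨m, hm, by simp⟩ hA
  obtain ⟨n, hnC, hn⟩ :=
    ((hl.eventually_mem_backwardEnd K).and (eventually_lt_atBot (-(k : ℤ)))).exists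
  obtain ⟨p, hp, hnp⟩ := hCA (heq ▸ hnC)
  have hdist := hl n p
  rw [abs_of_nonpos (by omega)] at hdist
  omega

end IsGeodesicLine

end GeodesicLineEnds

open GeodesicLineEnds in
/-- If `Γ` is a connected locally finite graph containing a geodesic
line `l : ℤ → V` such that every vertex is within distance `k` of the image of `l`
(for some `k > 0`), then `Γ` has exactly two ends. -/
theorem stmt3 {V : Type*} (Γ : SimpleGraph V) (hconn : Γ.Connected)
    (hlf : Γ.LocallyFinite) (l : ℤ → V)
    (hgeo : ∀ m n : ℤ, (Γ.dist (l m) (l n) : ℤ) = |m - n|)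
    (k : ℕ) (hk : 0 < k) (hcover : ∀ v : V, ∃ n : ℤ, Γ.dist v (l n) ≤ k) :
    Nat.card Γ.end = 2 := by
  have hl : IsGeodesicLine Γ l := hgeo
  refine Nat.card_eq_two_iff.mpr ⟨hl.forwardEnd, hl.backwardEnd, ?_, ?_⟩
  · exact hl.forwardEnd_ne_backwardEnd hconn hcover
  · exact Set.eq_univ_of_forall (hl.eq_forwardEnd_or_eq_backwardEnd hconn hcover)
end

section
/- Let Γ be a connected, locally finite simple graph on vertex set V, and let r : ℕ → V be a proper ray: Γ.Adj (r n) (r (n+1)) for all n, and for every finite K ⊆ V the set {n | r n ∈ K} is finite. Then for every vertex w there is a geodesic ray s : ℕ → V with s 0 = w, Γ.Adj (s n) (s (n+1)) for all n, and Γ.dist w (s n) = n for all n, such that s converges to the same end as r: for every finite K ⊆ V there exists N such that for all m, n ≥ N the vertices r m and s n lie outside K and are joined by a walk in Γ none of whose vertices lies in K (equivalently, they are reachable from one another in the induced subgraph on the complement of K). -/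
/-!
Call `v` *good* if it lies on a geodesic from `w` to `r m` for infinitely many `m`. The root `w` is
good, and since `v` has finitely many neighbors, the pigeonhole principle turns the first steps of
geodesics from a good `v` to the `r m` into a good neighbor one step further from `w`. Iterating
gives the geodesic ray `s`. Beyond `s n`, a geodesic from `w` to `r m` through `s n` stays outside
the open ball of radius `n` about `w`, which contains any given finite set once `n` is large; so it
joins `s n` to a far-out point of `r`, from which one can follow `r` itself.
-/

open Filter Set

section

variable {V : Type*} {Γ : SimpleGraph V}

/-- The metric interval between `w` and `y`: in a connected graph, the vertices that lie on some
geodesic from `w` to `y`. -/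
def geodesicInterval (Γ : SimpleGraph V) (w y : V) : Set V :=
  {v | Γ.dist w v + Γ.dist v y = Γ.dist w y}

/-- Two sequences of vertices converge to the same end: every finite set of vertices is avoided by
walks joining their tails. -/
def ConvergeToSameEnd (Γ : SimpleGraph V) (r s : ℕ → V) : Prop :=
  ∀ K : Set V, K.Finite → ∃ N : ℕ, ∀ m n : ℕ, N ≤ m → N ≤ n →
    r m ∉ K ∧ s n ∉ K ∧ ∃ p : Γ.Walk (r m) (s n), ∀ x ∈ p.support, x ∉ K

theorem left_mem_geodesicInterval (w y : V) : w ∈ geodesicInterval Γ w y := by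
  simp [geodesicInterval]

theorem mem_geodesicInterval_of_mem_of_mem (hconn : Γ.Connected) {w v x y : V}
    (hv : v ∈ geodesicInterval Γ w y) (hx : x ∈ geodesicInterval Γ v y) :
    v ∈ geodesicInterval Γ w x := by
  have hwx : Γ.dist w x ≤ Γ.dist w v + Γ.dist v x := hconn.dist_triangle
  have hwy : Γ.dist w y ≤ Γ.dist w x + Γ.dist x y := hconn.dist_triangle
  simp only [geodesicInterval, mem_ofPred_eq] at hv hx ⊢
  omega

theorem geodesicInterval_subset_of_mem (hconn : Γ.Connected) {w v y : V}
    (hv : v ∈ geodesicInterval Γ w y) : geodesicInterval Γ v y ⊆ geodesicInterval Γ w y := by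
  intro x hx
  have hvx : v ∈ geodesicInterval Γ w x := mem_geodesicInterval_of_mem_of_mem hconn hv hx
  simp only [geodesicInterval, mem_ofPred_eq] at hv hx hvx ⊢
  omega

theorem mem_geodesicInterval_of_mem_support {v x y : V} {p : Γ.Walk v y}
    (hp : p.length = Γ.dist v y) (hx : x ∈ p.support) : x ∈ geodesicInterval Γ v y := by
  obtain ⟨q, q', rfl⟩ := p.mem_support_iff_exists_append.1 hx
  rw [SimpleGraph.Walk.length_append] at hp
  exact ((add_le_add (SimpleGraph.dist_le q) (SimpleGraph.dist_le q')).trans_eq hp).antisymm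
    (q.reachable.dist_triangle_left y)

theorem exists_adj_mem_geodesicInterval {v y : V} (h : Γ.Reachable v y) (hne : v ≠ y) :
    ∃ u, Γ.Adj v u ∧ u ∈ geodesicInterval Γ v y := by
  obtain ⟨p, hp⟩ := h.exists_walk_length_eq_dist
  have hnil : ¬ p.Nil := SimpleGraph.Walk.not_nil_of_ne hne
  exact ⟨p.snd, p.adj_snd hnil, mem_geodesicInterval_of_mem_support hp (p.getVert_mem_support 1)⟩

theorem exists_adj_frequently_mem_geodesicInterval (hconn : Γ.Connected) {w v : V}
    (hfin : (Γ.neighborSet v).Finite) {l : Filter V} (hl : l ≤ cofinite)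
    (hv : ∃ᶠ y in l, v ∈ geodesicInterval Γ w y) :
    ∃ u, Γ.Adj v u ∧ Γ.dist w u = Γ.dist w v + 1 ∧ ∃ᶠ y in l, u ∈ geodesicInterval Γ w y := by
  have hne : ∀ᶠ y in l, v ≠ y := ((eventually_cofinite_ne v).filter_mono hl).mono fun _ ↦ Ne.symm
  have hstep : ∃ᶠ y in l, ∃ u ∈ Γ.neighborSet v,
      v ∈ geodesicInterval Γ w u ∧ u ∈ geodesicInterval Γ w y := by
    refine (hv.and_eventually hne).mono fun y ⟨hvy, hne⟩ ↦ ?_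
    obtain ⟨u, hadj, hu⟩ := exists_adj_mem_geodesicInterval (hconn v y) hne
    exact ⟨u, hadj, mem_geodesicInterval_of_mem_of_mem hconn hvy hu,
      geodesicInterval_subset_of_mem hconn hvy hu⟩
  obtain ⟨u, hadj, hu⟩ := hfin.frequently_exists.1 hstep
  obtain ⟨hvu, huy⟩ := frequently_and_distrib_left.1 hu
  refine ⟨u, hadj, ?_, huy⟩
  rw [← SimpleGraph.dist_eq_one_iff_adj.2 hadj]
  exact hvu.symm

theorem exists_geodesic_ray_frequently_mem_geodesicInterval (hconn : Γ.Connected)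
    (hfin : ∀ v, (Γ.neighborSet v).Finite) {l : Filter V} [l.NeBot] (hl : l ≤ cofinite) (w : V) :
    ∃ s : ℕ → V, s 0 = w ∧ (∀ n, Γ.Adj (s n) (s (n + 1))) ∧ (∀ n, Γ.dist w (s n) = n) ∧
      ∀ n, ∃ᶠ y in l, s n ∈ geodesicInterval Γ w y := by
  let Good := {v // ∃ᶠ y in l, v ∈ geodesicInterval Γ w y}
  have hstep : ∀ v : Good, ∃ u : Good, Γ.Adj v u ∧ Γ.dist w u = Γ.dist w v + 1 := by
    rintro ⟨v, hv⟩
    obtain ⟨u, hadj, hdist, hu⟩ := exists_adj_frequently_mem_geodesicInterval hconn (hfin v) hl hv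
    exact ⟨⟨u, hu⟩, hadj, hdist⟩
  choose next hadj hdist using hstep
  let root : Good := ⟨w, .of_forall (left_mem_geodesicInterval w)⟩
  let s (n : ℕ) : Good := next^[n] root
  have hsucc (n : ℕ) : s (n + 1) = next (s n) := Function.iterate_succ_apply' next n root
  have hsadj (n : ℕ) : Γ.Adj (s n) (s (n + 1)) := by
    rw [hsucc]
    exact hadj (s n)
  have hsdist (n : ℕ) : Γ.dist w (s n) = n := by
    induction n with
    | zero => exact SimpleGraph.dist_self
    | succ n ih => rw [hsucc, hdist, ih]
  exact ⟨fun n ↦ s n, rfl, hsadj, hsdist, fun n ↦ (s n).2⟩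

theorem exists_walk_support_subset_image_Icc {r : ℕ → V} (hadj : ∀ n, Γ.Adj (r n) (r (n + 1)))
    {m n : ℕ} (hmn : m ≤ n) : ∃ p : Γ.Walk (r m) (r n), ∀ x ∈ p.support, x ∈ r '' Icc m n := by
  induction n, hmn using Nat.le_induction with
  | base => exact ⟨.nil, by simp⟩
  | succ n hmn ih =>
    obtain ⟨p, hp⟩ := ih
    refine ⟨p.concat (hadj n), fun x hx ↦ ?_⟩
    rw [SimpleGraph.Walk.support_concat, List.mem_append, List.mem_singleton] at hx
    rcases hx with hx | rfl
    · exact image_mono (Icc_subset_Icc_right n.le_succ) (hp x hx)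
    · exact mem_image_of_mem r ⟨hmn.trans n.le_succ, le_rfl⟩

theorem convergeToSameEnd_of_frequently_mem_geodesicInterval (hconn : Γ.Connected) {r s : ℕ → V}
    {w : V} (hadj : ∀ n, Γ.Adj (r n) (r (n + 1))) (hr : Tendsto r atTop cofinite)
    (hs : Tendsto (fun n ↦ Γ.dist w (s n)) atTop atTop)
    (hrs : ∀ n, ∃ᶠ m in atTop, s n ∈ geodesicInterval Γ w (r m)) :
    ConvergeToSameEnd Γ r s := by
  intro K hK
  have hrK : ∀ᶠ m in atTop, r m ∉ K := hr.eventually hK.eventually_cofinite_notMem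
  have hsK : ∀ᶠ n in atTop, ∀ x ∈ K, Γ.dist w x < Γ.dist w (s n) :=
    hK.eventually_all.2 fun x _ ↦ hs.eventually_gt_atTop (Γ.dist w x)
  obtain ⟨N, hN⟩ := eventually_atTop.1 (hrK.and hsK)
  refine ⟨N, fun m n hm hn ↦ ?_⟩
  obtain ⟨k, hmk, hk⟩ := frequently_atTop.1 (hrs n) m
  obtain ⟨p, hp⟩ := exists_walk_support_subset_image_Icc hadj hmk
  obtain ⟨q, hq⟩ := hconn.exists_walk_length_eq_dist (s n) (r k)
  have hpK : ∀ x ∈ p.support, x ∉ K := by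
    intro x hx
    obtain ⟨i, hi, rfl⟩ := hp x hx
    exact (hN i (hm.trans hi.1)).1
  have hqK : ∀ x ∈ q.support, x ∉ K := by
    intro x hx hxK
    have hmem : s n ∈ geodesicInterval Γ w x :=
      mem_geodesicInterval_of_mem_of_mem hconn hk (mem_geodesicInterval_of_mem_support hq hx)
    exact ((hN n hn).2 x hxK).not_ge (Nat.le.intro hmem)
  refine ⟨hpK _ p.start_mem_support, hqK _ q.start_mem_support, p.append q.reverse, fun x hx ↦ ?_⟩
  rw [SimpleGraph.Walk.mem_support_append_iff, SimpleGraph.Walk.support_reverse,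
    List.mem_reverse] at hx
  exact hx.elim (hpK x) (hqK x)

end

/-- In a connected locally finite graph, for every proper ray `r` and
every vertex `w` there is a geodesic ray `s` starting at `w` converging to the same end
as `r`: for every finite set `K` of vertices, far-out points of `r` and of `s` avoid `K`
and can be joined by walks avoiding `K`. -/
theorem stmt4 {V : Type*} (Γ : SimpleGraph V) (hconn : Γ.Connected)
    (hlf : Γ.LocallyFinite) (r : ℕ → V)
    (hadj : ∀ n, Γ.Adj (r n) (r (n + 1)))
    (hproper : ∀ K : Set V, K.Finite → {n | r n ∈ K}.Finite)
    (w : V) :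
    ∃ s : ℕ → V, s 0 = w ∧ (∀ n, Γ.Adj (s n) (s (n + 1))) ∧
      (∀ n, Γ.dist w (s n) = n) ∧
      (∀ K : Set V, K.Finite → ∃ N : ℕ, ∀ m n : ℕ, N ≤ m → N ≤ n →
        r m ∉ K ∧ s n ∉ K ∧ ∃ p : Γ.Walk (r m) (s n), ∀ x ∈ p.support, x ∉ K) := by
  have hr : Tendsto r atTop cofinite := by
    rw [← Nat.cofinite_eq_atTop]
    exact Tendsto.cofinite_of_finite_preimage_singleton fun v ↦ hproper {v} (finite_singleton v)
  have hfin (v : V) : (Γ.neighborSet v).Finite :=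
    have := hlf v
    toFinite _
  obtain ⟨s, hs0, hsadj, hsdist, hrs⟩ :=
    exists_geodesic_ray_frequently_mem_geodesicInterval hconn hfin hr w
  have hs : Tendsto (fun n ↦ Γ.dist w (s n)) atTop atTop :=
    tendsto_id.congr fun n ↦ (hsdist n).symm
  exact ⟨s, hs0, hsadj, hsdist,
    convergeToSameEnd_of_frequently_mem_geodesicInterval hconn hadj hr hs hrs⟩
end

section
/- Let H, G₁, G₂ be groups and φᵢ : H → Gᵢ (i = 1, 2) injective group homomorphisms, and let G = G₁ ∗_H G₂ be the amalgamated free product (the pushout of the φᵢ). Suppose the image of φ₁ has index at least 3 in G₁ (where infinite index counts) and the image of φ₂ has index at least 2 in G₂. Then G contains a free subgroup of rank 2: there is an injective group homomorphism from the free group on two generators into G. -/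
/-!
Let `A` be the set of normal words of the amalgamated product starting with a letter of `G₁`, and
let `a, c ∈ G₁` lie, together with `a⁻¹ * c`, outside `H`. Then `a` and `c` send `Aᶜ` to disjoint
subsets of `A`, while any `b ∈ G₂` outside `H` sends `A` into `Aᶜ`. So `g = a * b * c⁻¹` maps the
complement of `c • Aᶜ` into `a • Aᶜ`; its conjugate by `b` does the same with both sets translated
into `Aᶜ`, and `g` and `b * g * b⁻¹` generate a free group by the ping-pong lemma.
-/

open Monoid Monoid.PushoutI
open scoped Pointwise

theorem exists_injective_freeGroup_bool_freeGroup (ι : Type*) [Nontrivial ι] :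
    ∃ f : FreeGroup Bool →* FreeGroup ι, Function.Injective f := by
  obtain ⟨x, y, hxy⟩ := exists_pair_ne ι
  exact ⟨FreeGroup.map fun t => cond t x y,
    FreeGroup.map_injective (Bool.injective_iff.2 hxy.symm)⟩

section PingPong

variable {P α : Type*} [Group P] [MulAction P α]

theorem smul_compl_subset_iff_inv_smul_compl_subset {g : P} {U V : Set α} :
    g • Vᶜ ⊆ U ↔ g⁻¹ • Uᶜ ⊆ V := by
  rw [Set.smul_set_compl, Set.compl_subset_comm, Set.subset_smul_set_iff]

theorem conj_smul_compl_smul_subset_iff {g h : P} {U V : Set α} :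
    (h * g * h⁻¹) • (h • V)ᶜ ⊆ h • U ↔ g • Vᶜ ⊆ U := by
  rw [← Set.smul_set_compl, smul_smul, inv_mul_cancel_right, mul_smul,
    Set.smul_set_subset_smul_set_iff]

theorem injective_freeGroup_lift_conj_of_ping_pong {g : P} {S : Set P} {U V : Set α}
    (hS : S.Nontrivial) (hU : U.Nonempty) (hUV : Disjoint U V)
    (hdisj : S.PairwiseDisjoint fun h => h • (U ∪ V)) (hg : g • Vᶜ ⊆ U) :
    Function.Injective (FreeGroup.lift fun h : S => (h : P) * g * (h : P)⁻¹) := by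
  have : Nontrivial S := hS.coe_sort
  have hUh (h : S) : (h : P) • U ⊆ (h : P) • (U ∪ V) :=
    Set.smul_set_mono Set.subset_union_left
  have hVh (h : S) : (h : P) • V ⊆ (h : P) • (U ∪ V) :=
    Set.smul_set_mono Set.subset_union_right
  have hne {h k : S} (hk : h ≠ k) : Disjoint ((h : P) • (U ∪ V)) ((k : P) • (U ∪ V)) :=
    hdisj h.2 k.2 (Subtype.coe_ne_coe.2 hk)
  have hconj (h : S) : ((h : P) * g * (h : P)⁻¹) • ((h : P) • V)ᶜ ⊆ (h : P) • U :=
    conj_smul_compl_smul_subset_iff.2 hg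
  refine FreeGroup.injective_lift_of_ping_pong _ (fun h : S => (h : P) • U)
    (fun h => (h : P) • V) (fun _ => hU.smul_set) ?_ ?_ ?_ hconj
    fun h => smul_compl_subset_iff_inv_smul_compl_subset.1 (hconj h)
  · exact fun h k hk => (hne hk).mono (hUh h) (hUh k)
  · exact fun h k hk => (hne hk).mono (hVh h) (hVh k)
  · intro h k
    obtain rfl | hk := eq_or_ne h k
    · exact Set.disjoint_smul_set.2 hUV
    · exact (hne hk).mono (hUh h) (hVh k)

theorem exists_injective_freeGroup_bool_of_ping_pong {a b c : P} {A : Set α} (hA : Aᶜ.Nonempty)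
    (ha : a • Aᶜ ⊆ A) (hc : c • Aᶜ ⊆ A) (hac : Disjoint (a • Aᶜ) (c • Aᶜ)) (hb : b • A ⊆ Aᶜ) :
    ∃ f : FreeGroup Bool →* P, Function.Injective f := by
  have hUV : a • Aᶜ ∪ c • Aᶜ ⊆ A := Set.union_subset ha hc
  have hdisj : Disjoint (a • Aᶜ ∪ c • Aᶜ) (b • (a • Aᶜ ∪ c • Aᶜ)) :=
    disjoint_compl_right.mono hUV ((Set.smul_set_mono hUV).trans hb)
  have hb_ne : (1 : P) ≠ b := by
    rintro rfl
    rw [one_smul, disjoint_self] at hdisj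
    exact hA.smul_set.inl.ne_empty hdisj
  have hS : ({1, b} : Set P).Nontrivial := Set.nontrivial_pair hb_ne
  have hS_disj : ({1, b} : Set P).PairwiseDisjoint fun h => h • (a • Aᶜ ∪ c • Aᶜ) :=
    Set.pairwise_pair_of_symm.2 fun _ => by simpa only [Function.onFun, one_smul] using hdisj
  have hg : (a * b * c⁻¹) • (c • Aᶜ)ᶜ ⊆ a • Aᶜ := by
    rw [← Set.smul_set_compl, smul_smul, inv_mul_cancel_right, mul_smul, compl_compl]
    exact Set.smul_set_mono hb
  have : Nontrivial ({1, b} : Set P) := hS.coe_sort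
  obtain ⟨f, hf⟩ := exists_injective_freeGroup_bool_freeGroup ({1, b} : Set P)
  exact ⟨(FreeGroup.lift _).comp f,
    (injective_freeGroup_lift_conj_of_ping_pong hS hA.smul_set hac hS_disj hg).comp hf⟩

end PingPong

section Index

variable {K : Type*} [Group K] {L : Subgroup K}

theorem exists_notMem_of_index_ne_one (h : L.index ≠ 1) : ∃ b, b ∉ L :=
  SetLike.exists_not_mem_of_ne_top L (mt Subgroup.index_eq_one.2 h)

theorem exists_notMem_notMem_inv_mul_notMem_of_index_ne (h₁ : L.index ≠ 1) (h₂ : L.index ≠ 2) :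
    ∃ a c, a ∉ L ∧ c ∉ L ∧ a⁻¹ * c ∉ L := by
  obtain ⟨a, ha⟩ := exists_notMem_of_index_ne_one h₁
  by_contra! hcosets
  refine h₂ (Subgroup.index_eq_two_iff_exists_notMem_and'.2 ⟨a⁻¹, mt inv_mem_iff.1 ha, ?_⟩)
  exact fun c => or_iff_not_imp_right.2 (hcosets a c ha)

end Index

section NormalWord

variable {ι H : Type*} {G : ι → Type*} [Group H] [∀ i, Group (G i)] {φ : ∀ i, H →* G i}

/-- The normal words whose first syllable lies in `G i`, used as ping-pong sets. The leading factor
from the amalgamated subgroup is disregarded, so words without syllables start in no `G i`. -/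
def normalWordsStartingIn (d : NormalWord.Transversal φ) (i : ι) : Set (NormalWord d) :=
  {w | w.fstIdx = some i}

variable (d : NormalWord.Transversal φ)

theorem disjoint_normalWordsStartingIn {i j : ι} (hij : i ≠ j) :
    Disjoint (normalWordsStartingIn d i) (normalWordsStartingIn d j) :=
  Set.disjoint_left.2 fun _ hi hj => hij (Option.some_injective _ (hi.symm.trans hj))

theorem compl_normalWordsStartingIn_nonempty (i : ι) : (normalWordsStartingIn d i)ᶜ.Nonempty :=
  ⟨NormalWord.empty, Option.some_ne_none i ∘ Eq.symm⟩

variable [DecidableEq ι] [∀ i, DecidableEq (G i)]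

theorem of_smul_compl_normalWordsStartingIn_subset {i : ι} {g : G i} (hg : g ∉ (φ i).range) :
    (of i g : PushoutI φ) • (normalWordsStartingIn d i)ᶜ ⊆ normalWordsStartingIn d i := by
  rintro _ ⟨w, hw, rfl⟩
  change (of i g • w).fstIdx = some i
  rw [← NormalWord.cons_eq_smul g w hw hg]
  rfl

theorem disjoint_of_smul_compl_normalWordsStartingIn {i : ι} {g k : G i}
    (hgk : g⁻¹ * k ∉ (φ i).range) :
    Disjoint ((of i g : PushoutI φ) • (normalWordsStartingIn d i)ᶜ)
      ((of i k : PushoutI φ) • (normalWordsStartingIn d i)ᶜ) := by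
  rw [disjoint_comm, Set.disjoint_smul_set_right, ← mul_smul, ← map_inv, ← map_mul]
  exact disjoint_compl_right.mono_left (of_smul_compl_normalWordsStartingIn_subset d hgk)

end NormalWord

theorem stmt10_general {ι H : Type*} [Group H] {G : ι → Type*} [∀ i, Group (G i)]
    (φ : ∀ i, H →* G i) (hinj : ∀ i, Function.Injective (φ i)) {i j : ι} (hij : i ≠ j)
    (hi₁ : (φ i).range.index ≠ 1) (hi₂ : (φ i).range.index ≠ 2) (hj : (φ j).range.index ≠ 1) :
    ∃ f : FreeGroup Bool →* PushoutI φ, Function.Injective f := by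
  classical
  obtain ⟨d⟩ := NormalWord.transversal_nonempty φ hinj
  obtain ⟨a, c, ha, hc, hac⟩ := exists_notMem_notMem_inv_mul_notMem_of_index_ne hi₁ hi₂
  obtain ⟨b, hb⟩ := exists_notMem_of_index_ne_one hj
  have hdisj := disjoint_normalWordsStartingIn d hij
  refine exists_injective_freeGroup_bool_of_ping_pong (a := of i a) (b := of j b) (c := of i c)
    (compl_normalWordsStartingIn_nonempty d i)
    (of_smul_compl_normalWordsStartingIn_subset d ha)
    (of_smul_compl_normalWordsStartingIn_subset d hc)
    (disjoint_of_smul_compl_normalWordsStartingIn d hac) ?_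
  calc (of j b : PushoutI φ) • normalWordsStartingIn d i
    _ ⊆ (of j b : PushoutI φ) • (normalWordsStartingIn d j)ᶜ :=
      Set.smul_set_mono hdisj.subset_compl_right
    _ ⊆ normalWordsStartingIn d j := of_smul_compl_normalWordsStartingIn_subset d hb
    _ ⊆ (normalWordsStartingIn d i)ᶜ := hdisj.subset_compl_left

/-- Let `G = G₁ ∗_H G₂` be an amalgamated free product along injective
homomorphisms `φ i : H →* G i`, where the image of `φ 0` has index at least `3` in `G 0`
(infinite index allowed, i.e. index `0`) and the image of `φ 1` has index at least `2`
in `G 1`.  Then `G` contains a free subgroup of rank `2`. -/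
theorem stmt10 {H : Type*} [Group H] {G : Fin 2 → Type*} [∀ i, Group (G i)]
    (φ : ∀ i, H →* G i) (hinj : ∀ i, Function.Injective (φ i))
    (h0 : (φ 0).range.index = 0 ∨ 3 ≤ (φ 0).range.index)
    (h1 : (φ 1).range.index = 0 ∨ 2 ≤ (φ 1).range.index) :
    ∃ f : FreeGroup Bool →* Monoid.PushoutI φ, Function.Injective f :=
  stmt10_general φ hinj zero_ne_one (by omega) (by omega) (by omega)
end

section
/- Let H, G₁, G₂ be groups and φᵢ : H → Gᵢ (i = 1, 2) injective but non-surjective group homomorphisms, and let G = G₁ ∗_H G₂ be the amalgamated free product. Then for each i the image of the canonical homomorphism of_i : Gᵢ → G has infinite index in G. In particular, no vertex group of a nontrivial amalgamated free product contains a subgroup of finite index in G. -/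
/-!
Let `w` be a reduced word whose first and last letters come from different factors. All positive
powers of `w` are then reduced and start in the same factor as `w`, so none of them lies in another
factor `G k`: if `w ^ n = g` with `g ∈ G k` outside the amalgamated subgroup, then `g⁻¹ w ^ n` would
be a nonempty reduced word for `1`, against the normal form theorem. In a subgroup of finite index
some positive power of every element appears, so `G k` has infinite index. For `a` and `b` outside
the amalgamated subgroup in two distinct factors, one of `a b` and `b a` is such a `w` starting
outside `G k`.
-/

open Monoid PushoutI
open Monoid.CoprodI (NeWord)

section

variable {ι H : Type*} {G : ι → Type*} [Group H] [∀ i, Group (G i)] {φ : ∀ i, H →* G i}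
variable {i j k l : ι}

theorem reduced_singleton {g : G i} (hg : g ∉ (φ i).range) :
    Reduced φ (NeWord.singleton g (ne_of_mem_of_not_mem (one_mem _) hg).symm).toWord := by
  simpa [Reduced, NeWord.toWord] using hg

theorem reduced_append {v : NeWord G i j} {w : NeWord G k l} (hv : Reduced φ v.toWord)
    (hw : Reduced φ w.toWord) (hjk : j ≠ k) : Reduced φ (v.append hjk w).toWord := fun x hx ↦
  (List.mem_append.1 hx).elim (hv x) (hw x)

theorem exists_reduced_neWord (hi : ¬ Function.Surjective (φ i))
    (hj : ¬ Function.Surjective (φ j)) (hij : i ≠ j) :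
    ∃ w : NeWord G i j, Reduced φ w.toWord := by
  obtain ⟨a, ha⟩ := not_forall.1 hi
  obtain ⟨b, hb⟩ := not_forall.1 hj
  exact ⟨_, reduced_append (reduced_singleton ha) (reduced_singleton hb) hij⟩

theorem ofCoprodI_prod_notMem_range_base (hφ : ∀ i, Function.Injective (φ i)) {w : NeWord G i j}
    (hw : Reduced φ w.toWord) : ofCoprodI w.prod ∉ (base φ).range := fun hmem ↦
  w.toList_ne_nil <| congrArg CoprodI.Word.toList <| hw.eq_empty_of_mem_range hφ hmem

theorem ofCoprodI_prod_notMem_range_of (hφ : ∀ i, Function.Injective (φ i)) {w : NeWord G i j}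
    (hw : Reduced φ w.toWord) (hki : k ≠ i) :
    ofCoprodI w.prod ∉ (of (φ := φ) k).range := by
  rintro ⟨g, hg⟩
  by_cases hgφ : g ∈ (φ k).range
  · obtain ⟨h, rfl⟩ := hgφ
    exact ofCoprodI_prod_notMem_range_base hφ hw ⟨h, by rw [← hg, of_apply_eq_base]⟩
  · have hinv : g⁻¹ ∉ (φ k).range := by rwa [inv_mem_iff]
    refine ofCoprodI_prod_notMem_range_base hφ
      (reduced_append (reduced_singleton hinv) hw hki) ?_
    rw [NeWord.append_prod, NeWord.prod_singleton, map_mul, ofCoprodI_of, ← hg, ← map_mul,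
      inv_mul_cancel, map_one]
    exact one_mem _

theorem exists_reduced_prod_eq_pow {w : NeWord G i j} (hw : Reduced φ w.toWord) (hji : j ≠ i)
    {n : ℕ} (hn : 0 < n) : ∃ v : NeWord G i j, Reduced φ v.toWord ∧ v.prod = w.prod ^ n := by
  induction n, hn using Nat.le_induction with
  | base => exact ⟨w, hw, (pow_one _).symm⟩
  | succ n _ ih =>
    obtain ⟨v, hv, hvw⟩ := ih
    exact ⟨v.append hji w, reduced_append hv hw hji, by rw [NeWord.append_prod, hvw, pow_succ]⟩

theorem index_range_of_eq_zero_of_reduced (hφ : ∀ i, Function.Injective (φ i)) {w : NeWord G i j}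
    (hw : Reduced φ w.toWord) (hji : j ≠ i) (hki : k ≠ i) :
    (of (φ := φ) k).range.index = 0 := by
  by_contra hindex
  obtain ⟨n, hn, -, hmem⟩ :=
    Subgroup.exists_pow_mem_of_index_ne_zero hindex (ofCoprodI (φ := φ) w.prod)
  obtain ⟨v, hv, hvw⟩ := exists_reduced_prod_eq_pow hw hji hn
  rw [← map_pow, ← hvw] at hmem
  exact ofCoprodI_prod_notMem_range_of hφ hv hki hmem

end

theorem stmt11_general {ι H : Type*} [Group H] {G : ι → Type*} [∀ i, Group (G i)]
    (φ : ∀ i, H →* G i) (hinj : ∀ i, Function.Injective (φ i)) {i j : ι} (hij : i ≠ j)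
    (hi : ¬ Function.Surjective (φ i)) (hj : ¬ Function.Surjective (φ j)) (k : ι) :
    (of (φ := φ) k).range.index = 0 := by
  wlog hki : k ≠ i generalizing i j
  · exact this hij.symm hj hi (not_not.1 hki ▸ hij)
  obtain ⟨w, hw⟩ := exists_reduced_neWord hi hj hij
  exact index_range_of_eq_zero_of_reduced hinj hw hij.symm hki

/-- In a nontrivial amalgamated free product `G = G₁ ∗_H G₂` (the
homomorphisms `φ i : H →* G i` are injective and not surjective), the image of each
canonical homomorphism `of i : G i →* G` has infinite index in `G`. -/
theorem stmt11 {H : Type*} [Group H] {G : Fin 2 → Type*} [∀ i, Group (G i)]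
    (φ : ∀ i, H →* G i) (hinj : ∀ i, Function.Injective (φ i))
    (hnsurj : ∀ i, ¬ Function.Surjective (φ i)) (i : Fin 2) :
    (Monoid.PushoutI.of (φ := φ) i).range.index = 0 :=
  stmt11_general φ hinj zero_ne_one (hnsurj 0) (hnsurj 1) i
end

section
/- Let G be a finitely presented group and ε : G → ℤ a surjective homomorphism whose kernel N is locally finite, meaning every finitely generated subgroup of N is finite. Then N is finite. That is, every finitely presented (locally finite)-by-ℤ group is (finite)-by-ℤ. -/
/-- A group is finitely presented if it is isomorphic to the quotient of a free group of
finite rank by the normal closure of a finite set of relators. -/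
def IsFinitelyPresented (G : Type*) [Group G] : Prop :=
  ∃ (n : ℕ) (R : Set (FreeGroup (Fin n))), R.Finite ∧ Nonempty (G ≃* PresentedGroup R)

/-!
Write `G = N ⋊ ℤ`, the generator of `ℤ` acting on `N` by `α`. For a subgroup `H ≤ N`, the group
`H` together with a stable letter `t` conjugating `x` to `α x` whenever `x` and `α x` are both in
`H` is an HNN extension, and `(x, m) ↦ x * t ^ m` sends the elements of `G` over `H` to it. This
map is not a homomorphism, but each of its finitely many failures on the relators of `G`
disappears as `H` grows through the finitely generated subgroups of `N`. So for some finite `H`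
there is a homomorphism `ψ` from `G` to the HNN extension with the expected values on a finite
generating set. Let `K ≤ H` be the subgroup on which `ψ` is the inclusion of `H`. If both
`α K ≤ K` and `α⁻¹ K ≤ K` failed, then some `t x t⁻¹ y` with `x, y ∈ K` would have infinite order
by Britton's lemma, although it is the image of the torsion element `α x * y` of `N`. As `K` is
finite, it follows that `α K = K`, and since `K` contains the `N`-components of generators of `G`,
it is all of `N`.
-/

open Filter SemidirectProduct

open scoped Pointwise

section Britton

open HNNExtension NormalWord

variable {K : Type*} [Group K] {A B : Subgroup K} {φ : A ≃* B}

theorem not_isOfFinOrder_conj_t_mul_of {x y : K} (hx : x ∉ A) (hy : y ∉ B) :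
    ¬ IsOfFinOrder (t * of x * t⁻¹ * of y : HNNExtension K A B φ) := by
  rw [isOfFinOrder_iff_pow_eq_one]
  rintro ⟨n, hn, hpow⟩
  let syllables : List (ℤˣ × K) := (List.replicate n [(1, x), (-1, y)]).flatten
  have notMem : ∀ a ∈ syllables, a.2 ∉ toSubgroup A B a.1 := by
    simp only [syllables, List.mem_flatten, List.mem_replicate]
    rintro a ⟨_, ⟨-, rfl⟩, ha⟩
    simp only [List.mem_cons, List.not_mem_nil, or_false] at ha
    obtain rfl | rfl := ha
    exacts [hx, hy]
  let w : ReducedWord K A B :=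
    { head := 1
      toList := syllables
      chain := (List.pairwise_of_forall_mem_list
        fun a ha _ _ hmem ↦ absurd hmem (notMem a ha)).isChain }
  have prod_w : w.prod φ = 1 := by
    simpa [ReducedWord.prod, w, syllables, List.prod_flatten, mul_assoc] using hpow
  have toList_w : w.toList = [] :=
    ReducedWord.toList_eq_nil_of_mem_of_range φ w (prod_w ▸ one_mem _)
  simp [w, syllables, hn.ne'] at toList_w

end Britton

section ReducedProduct

variable {G ι : Type*} [Group G] {E : ι → Type*} [∀ i, Group (E i)]

/-- A family of maps from `G` to groups is eventually multiplicative along a filter if each single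
product in `G` is eventually preserved; the family then induces a homomorphism from `G` to the
reduced product of the target groups. -/
def EventuallyMul (l : Filter ι) (σ : ∀ i, G → E i) : Prop :=
  ∀ g h, ∀ᶠ i in l, σ i (g * h) = σ i g * σ i h

namespace EventuallyMul

variable {l : Filter ι} {σ : ∀ i, G → E i}

theorem map_one (hσ : EventuallyMul l σ) : ∀ᶠ i in l, σ i 1 = 1 := by
  filter_upwards [hσ 1 1] with i hi
  simpa using hi

theorem map_inv (hσ : EventuallyMul l σ) (g : G) : ∀ᶠ i in l, σ i g⁻¹ = (σ i g)⁻¹ := by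
  filter_upwards [hσ g⁻¹ g, hσ.map_one] with i hmul hone
  rw [inv_mul_cancel, hone] at hmul
  exact eq_inv_of_mul_eq_one_left hmul.symm

theorem freeGroupLift_eq (hσ : EventuallyMul l σ) {X : Type*} (q : FreeGroup X →* G)
    (w : FreeGroup X) :
    ∀ᶠ i in l, FreeGroup.lift (fun x ↦ σ i (q (FreeGroup.of x))) w = σ i (q w) := by
  induction w using FreeGroup.induction_on with
  | C1 =>
    filter_upwards [hσ.map_one] with i hi
    simp [hi]
  | of x => simp
  | inv_of x _ =>
    filter_upwards [hσ.map_inv (q (FreeGroup.of x))] with i hi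
    simp [hi]
  | mul v w hv hw =>
    filter_upwards [hv, hw, hσ (q v) (q w)] with i hv hw hvw
    rw [map_mul, map_mul, hv, hw, hvw]

theorem exists_monoidHom_eqOn [Group.IsFinitelyPresented G] (hσ : EventuallyMul l σ)
    {T : Set G} (hT : T.Finite) : ∀ᶠ i in l, ∃ ψ : G →* E i, Set.EqOn ψ (σ i) T := by
  obtain ⟨n, q, hq, R, hR, hker⟩ := ‹Group.IsFinitelyPresented G›
  have relators : ∀ᶠ i in l, ∀ r ∈ R, FreeGroup.lift (fun x ↦ σ i (q (FreeGroup.of x))) r = 1 := by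
    refine (eventually_all_finite hR).2 fun r hr ↦ ?_
    have q_r : q r = 1 := MonoidHom.mem_ker.1 (hker ▸ Subgroup.subset_normalClosure hr)
    filter_upwards [hσ.freeGroupLift_eq q r, hσ.map_one] with i hr hone
    rw [hr, q_r, hone]
  have values := (eventually_all_finite hT).2 fun g _ ↦
    hσ.freeGroupLift_eq q (Function.surjInv hq g)
  filter_upwards [relators, values] with i relators values
  set f : FreeGroup (Fin n) →* E i := FreeGroup.lift fun x ↦ σ i (q (FreeGroup.of x))
  have ker_le : q.ker ≤ f.ker := hker ▸ Subgroup.normalClosure_le_normal relators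
  refine ⟨q.liftOfSurjective hq ⟨f, ker_le⟩, fun g hg ↦ ?_⟩
  calc q.liftOfSurjective hq ⟨f, ker_le⟩ g
    _ = f (Function.surjInv hq g) := rfl
    _ = σ i g := by rw [values g hg, Function.surjInv_eq hq]

end EventuallyMul

end ReducedProduct

section Invariant

variable {N Q : Type*} [Group N] [Group Q]

theorem pointwise_smul_eq_of_le {α : MulAut N} {K : Subgroup N} [Finite K] (h : α • K ≤ K) :
    α • K = K :=
  Subgroup.eq_of_le_of_card_ge h (Nat.card_congr (Subgroup.equivSMul α K).toEquiv).le

theorem eq_top_of_forall_smul_eq {φ : Q →* MulAut N} {T : Set (N ⋊[φ] Q)}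
    (hT : Subgroup.closure T = ⊤) {K : Subgroup N} (hK : ∀ g, φ g • K = K)
    (hTK : ∀ g ∈ T, g.left ∈ K) : K = ⊤ := by
  have apply_mem (q : Q) {x : N} (hx : x ∈ K) : φ q x ∈ K :=
    hK q ▸ Subgroup.smul_mem_pointwise_smul x (φ q) K hx
  have left_mem (g : N ⋊[φ] Q) : g.left ∈ K := by
    induction hT ▸ Subgroup.mem_top g using Subgroup.closure_induction with
    | mem g hg => exact hTK g hg
    | one => exact K.one_mem
    | mul g h _ _ hg hh => exact mul_mem hg (apply_mem _ hh)
    | inv g _ hg => exact apply_mem _ (inv_mem hg)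
  exact (Subgroup.eq_top_iff' K).2 fun x ↦ left_mem (inl x)

end Invariant

section MappingTorus

variable {N : Type*} [Group N] (α : MulAut N) (H : Subgroup N)

/-- The domain of the partial automorphism which `α` induces on `H`: the `x ∈ H` with `α x ∈ H`. -/
def restrictDomain : Subgroup H :=
  (H.comap α.toMonoidHom).subgroupOf H

variable {α H} in
theorem mem_restrictDomain {x : H} : x ∈ restrictDomain α H ↔ α x ∈ H :=
  Iff.rfl

/-- The partial automorphism of `H` induced by `α`, as an isomorphism from its domain to its
range. -/
def restrictEquiv : restrictDomain α H ≃* restrictDomain α⁻¹ H where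
  toFun x := ⟨⟨α x, x.2⟩, by simp [mem_restrictDomain]⟩
  invFun x := ⟨⟨α⁻¹ x, x.2⟩, by simp [mem_restrictDomain]⟩
  left_inv x := by simp
  right_inv x := by simp
  map_mul' x y := by ext; simp

/-- The HNN extension of `H` whose stable letter acts on `H` as `α` does, as far as that makes
sense inside `H`. For `H = N` this is the semidirect product of `N` with `ℤ` acting through `α`. -/
abbrev PartialMappingTorus : Type _ :=
  HNNExtension H (restrictDomain α H) (restrictDomain α⁻¹ H) (restrictEquiv α H)

namespace PartialMappingTorus

open HNNExtension

open Classical in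
/-- The inclusion of `H` in the partial mapping torus, extended to `N` by the junk value `1`
outside `H`, so that the inclusions for different `H` have a common domain. -/
noncomputable def incl (x : N) : PartialMappingTorus α H :=
  if hx : x ∈ H then of ⟨x, hx⟩ else 1

/-- The map `(x, m) ↦ x * t ^ m` from the semidirect product to the partial mapping torus; its
values are meaningful only for `x ∈ H`. -/
noncomputable def ofSemidirect (g : N ⋊[zpowersHom (MulAut N) α] Multiplicative ℤ) :
    PartialMappingTorus α H :=
  incl α H g.left * t ^ g.right.toAdd

variable {α H}

theorem incl_of_mem {x : N} (hx : x ∈ H) : incl α H x = of ⟨x, hx⟩ :=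
  dif_pos hx

theorem incl_mul {x y : N} (hx : x ∈ H) (hy : y ∈ H) :
    incl α H (x * y) = incl α H x * incl α H y := by
  rw [incl_of_mem hx, incl_of_mem hy, incl_of_mem (mul_mem hx hy), ← map_mul, MulMemClass.mk_mul_mk]

theorem semiconjBy_t_incl {x : N} (hx : x ∈ H) (hαx : α x ∈ H) :
    SemiconjBy t (incl α H x) (incl α H (α x)) := by
  rw [incl_of_mem hx, incl_of_mem hαx]
  exact t_mul_of (φ := restrictEquiv α H) ⟨⟨x, hx⟩, hαx⟩

theorem ofSemidirect_inl {x : N} (hx : x ∈ H) : ofSemidirect α H (inl x) = of ⟨x, hx⟩ := by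
  simp [ofSemidirect, incl_of_mem hx]

theorem ofSemidirect_inr_ofAdd_one : ofSemidirect α H (inr (Multiplicative.ofAdd 1)) = t := by
  have incl_one : incl α H 1 = 1 := (incl_of_mem H.one_mem).trans (map_one of)
  simp [ofSemidirect, incl_one]

section Agreement

variable (ψ : N ⋊[zpowersHom (MulAut N) α] Multiplicative ℤ →* PartialMappingTorus α H)

/-- The subgroup of those `x ∈ H` which a homomorphism `ψ` from the semidirect product to the
partial mapping torus sends to the copy of `x` in the base group. -/
def agreement : Subgroup N :=
  (((ψ.comp inl).comp H.subtype).eqLocus of).map H.subtype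

variable {ψ}

theorem mem_agreement {x : N} : x ∈ agreement ψ ↔ ∃ hx : x ∈ H, ψ (inl x) = of ⟨x, hx⟩ := by
  constructor
  · rintro ⟨x, hx, rfl⟩
    exact ⟨x.2, hx⟩
  · rintro ⟨hx, h⟩
    exact ⟨⟨x, hx⟩, h, rfl⟩

theorem agreement_le : agreement ψ ≤ H :=
  fun _ hx ↦ (mem_agreement.1 hx).1

variable (hψ : ψ (inr (Multiplicative.ofAdd 1)) = t)

include hψ

theorem map_inl_apply (x : N) : ψ (inl (α x)) = t * ψ (inl x) * t⁻¹ := by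
  have conj := inl_aut (φ := zpowersHom (MulAut N) α) (Multiplicative.ofAdd 1) x
  simp only [zpowersHom_apply, toAdd_ofAdd, zpow_one] at conj
  rw [conj, map_mul, map_mul, ← hψ, map_inv, map_inv]

theorem apply_mem_agreement {x : N} (hx : x ∈ agreement ψ) (hαx : α x ∈ H) :
    α x ∈ agreement ψ := by
  obtain ⟨hxH, hψx⟩ := mem_agreement.1 hx
  refine mem_agreement.2 ⟨hαx, ?_⟩
  rw [map_inl_apply hψ, hψx]
  exact (equiv_eq_conj (φ := restrictEquiv α H) ⟨⟨x, hxH⟩, hαx⟩).symm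

theorem inv_apply_mem_agreement {x : N} (hx : x ∈ agreement ψ) (hαx : α⁻¹ x ∈ H) :
    α⁻¹ x ∈ agreement ψ := by
  obtain ⟨hxH, hψx⟩ := mem_agreement.1 hx
  refine mem_agreement.2 ⟨hαx, ?_⟩
  have ψ_inv_apply : ψ (inl (α⁻¹ x)) = t⁻¹ * of ⟨x, hxH⟩ * t := by
    have conj := map_inl_apply hψ (α⁻¹ x)
    rw [MulAut.apply_inv_self, hψx] at conj
    rw [conj]
    group
  rw [ψ_inv_apply]
  exact (equiv_symm_eq_conj (φ := restrictEquiv α H) ⟨⟨x, hxH⟩, hαx⟩).symm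

theorem smul_agreement_le_or (hN : IsMulTorsion N) :
    α • agreement ψ ≤ agreement ψ ∨ α⁻¹ • agreement ψ ≤ agreement ψ := by
  by_contra! ⟨hα, hα'⟩
  obtain ⟨_, ⟨x, hx, rfl⟩, hαx⟩ := SetLike.not_le_iff_exists.1 hα
  obtain ⟨_, ⟨y, hy, rfl⟩, hαy⟩ := SetLike.not_le_iff_exists.1 hα'
  obtain ⟨hxH, hψx⟩ := mem_agreement.1 hx
  obtain ⟨hyH, hψy⟩ := mem_agreement.1 hy
  have x_notMem : ⟨x, hxH⟩ ∉ restrictDomain α H :=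
    fun h ↦ hαx (apply_mem_agreement hψ hx h)
  have y_notMem : ⟨y, hyH⟩ ∉ restrictDomain α⁻¹ H :=
    fun h ↦ hαy (inv_apply_mem_agreement hψ hy h)
  apply not_isOfFinOrder_conj_t_mul_of (φ := restrictEquiv α H) x_notMem y_notMem
  rw [← hψx, ← hψy, ← map_inl_apply hψ, ← map_mul, ← map_mul]
  exact (ψ.comp inl).isOfFinOrder (hN (α x * y))

theorem smul_agreement_eq (hN : IsMulTorsion N) [Finite (agreement ψ)] :
    α • agreement ψ = agreement ψ := by
  obtain hα | hα := smul_agreement_le_or hψ hN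
  · exact pointwise_smul_eq_of_le hα
  · exact (inv_smul_eq_iff.1 (pointwise_smul_eq_of_le hα)).symm

end Agreement

section Exhaustion

variable {ι : Type*} {l : Filter ι} {H : ι → Subgroup N} (hH : ∀ x, ∀ᶠ i in l, x ∈ H i)

include hH

theorem eventually_semiconjBy_t_zpow_incl (m : ℤ) (x : N) :
    ∀ᶠ i in l, SemiconjBy (t ^ m) (incl α (H i) x) (incl α (H i) ((α ^ m) x)) := by
  induction m with
  | zero => simp
  | succ m ih =>
    filter_upwards [ih, hH ((α ^ (m : ℤ)) x), hH ((α ^ (m + 1 : ℤ)) x)] with i ih hm hm'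
    have step : (α ^ (m + 1 : ℤ)) x = α ((α ^ (m : ℤ)) x) := by
      rw [add_comm, zpow_one_add, MulAut.mul_apply]
    rw [step] at hm' ⊢
    rw [add_comm, zpow_one_add]
    exact (semiconjBy_t_incl hm hm').mul_left ih
  | pred m ih =>
    filter_upwards [ih, hH ((α ^ (-m : ℤ)) x), hH ((α ^ (-m - 1 : ℤ)) x)] with i ih hm hm'
    have step : α ((α ^ (-m - 1 : ℤ)) x) = (α ^ (-m : ℤ)) x := by
      rw [← MulAut.mul_apply, ← zpow_one_add, add_sub_cancel]
    have semiconj := semiconjBy_t_incl hm' (step ▸ hm)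
    rw [step] at semiconj
    rw [sub_eq_neg_add, zpow_add, zpow_neg_one, ← sub_eq_neg_add]
    exact semiconj.inv_symm_left.mul_left ih

variable (α)

theorem eventuallyMul_ofSemidirect : EventuallyMul l fun i ↦ ofSemidirect α (H i) := by
  intro g h
  set m : ℤ := g.right.toAdd with hm
  filter_upwards [hH g.left, hH ((α ^ m) h.left),
    eventually_semiconjBy_t_zpow_incl hH m h.left] with i hg hh semiconj
  calc ofSemidirect α (H i) (g * h)
    _ = incl α (H i) g.left * incl α (H i) ((α ^ m) h.left) * (t ^ m * t ^ h.right.toAdd) := by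
      rw [← incl_mul hg hh, ← zpow_add]
      simp [ofSemidirect, hm]
    _ = incl α (H i) g.left * (incl α (H i) ((α ^ m) h.left) * t ^ m) * t ^ h.right.toAdd := by
      simp only [mul_assoc]
    _ = ofSemidirect α (H i) g * ofSemidirect α (H i) h := by
      rw [← semiconj.eq]
      simp only [ofSemidirect, hm, mul_assoc]

open Multiplicative in
theorem eventually_exists_monoidHom_subset_agreement
    [Group.IsFinitelyPresented (N ⋊[zpowersHom (MulAut N) α] Multiplicative ℤ)]
    {F : Set N} (hF : F.Finite) :
    ∀ᶠ i in l, ∃ ψ : N ⋊[zpowersHom (MulAut N) α] Multiplicative ℤ →* PartialMappingTorus α (H i),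
      ψ (inr (ofAdd 1)) = t ∧ F ⊆ agreement ψ := by
  filter_upwards [(eventuallyMul_ofSemidirect α hH).exists_monoidHom_eqOn
    ((hF.image inl).insert (inr (ofAdd 1))), (eventually_all_finite hF).2 fun x _ ↦ hH x]
    with i ⟨ψ, hψ⟩ hFH
  have ψ_t := (hψ (Set.mem_insert _ _)).trans ofSemidirect_inr_ofAdd_one
  refine ⟨ψ, ψ_t, fun x hx ↦ mem_agreement.2 ⟨hFH x hx, ?_⟩⟩
  have ψ_inl := hψ (Set.mem_insert_of_mem _ (Set.mem_image_of_mem inl hx))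
  exact ψ_inl.trans (ofSemidirect_inl (hFH x hx))

end Exhaustion

end PartialMappingTorus

end MappingTorus

/-- A group is locally finite if all its finitely generated subgroups are finite. -/
def IsLocallyFiniteGroup (N : Type*) [Group N] : Prop :=
  ∀ H : Subgroup N, H.FG → Finite H

theorem IsLocallyFiniteGroup.isMulTorsion {N : Type*} [Group N] (hN : IsLocallyFiniteGroup N) :
    IsMulTorsion N := fun x ↦
  have zpowers_fg : (Subgroup.zpowers x).FG :=
    ⟨{x}, by rw [Finset.coe_singleton, Subgroup.zpowers_eq_closure]⟩
  finite_zpowers.1 (hN _ zpowers_fg)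

open PartialMappingTorus in
theorem IsLocallyFiniteGroup.finite_of_isFinitelyPresented {N : Type*} [Group N]
    (hN : IsLocallyFiniteGroup N) (α : MulAut N)
    [Group.IsFinitelyPresented (N ⋊[zpowersHom (MulAut N) α] Multiplicative ℤ)] : Finite N := by
  obtain ⟨_, q, hq, -⟩ := ‹Group.IsFinitelyPresented (N ⋊[zpowersHom _ α] Multiplicative ℤ)›
  obtain ⟨T, closure_T, hT⟩ := Group.fg_iff.1 (Group.fg_of_surjective hq)
  have exhaust (x : N) : ∀ᶠ S : Finset N in atTop, x ∈ Subgroup.closure (S : Set N) :=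
    (eventually_ge_atTop {x}).mono fun S hS ↦
      Subgroup.subset_closure (hS (Finset.mem_singleton_self x))
  obtain ⟨S, ψ, hψ, left_mem⟩ :=
    (eventually_exists_monoidHom_subset_agreement α exhaust (hT.image left)).exists
  have : Finite (Subgroup.closure (S : Set N)) := hN _ ⟨S, rfl⟩
  have : Finite (agreement ψ) := Finite.Set.subset _ (agreement_le (ψ := ψ))
  have invariant (m : Multiplicative ℤ) :
      zpowersHom (MulAut N) α m • agreement ψ = agreement ψ :=
    zpow_mem (K := MulAction.stabilizer (MulAut N) (agreement ψ))
      (smul_agreement_eq hψ hN.isMulTorsion) m.toAdd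
  have agreement_eq_top : agreement ψ = ⊤ :=
    eq_top_of_forall_smul_eq closure_T invariant (Set.forall_mem_image.1 left_mem)
  exact Subgroup.topEquiv.finite_iff.1 (agreement_eq_top ▸ ‹Finite (agreement ψ)›)

theorem exists_mulEquiv_semidirectProduct_ker {G : Type*} [Group G] {ε : G →* Multiplicative ℤ}
    (hε : Function.Surjective ε) :
    ∃ α : MulAut ε.ker,
      Nonempty (G ≃* ε.ker ⋊[zpowersHom (MulAut ε.ker) α] Multiplicative ℤ) := by
  obtain ⟨s, hs⟩ := hε (Multiplicative.ofAdd 1)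
  let S : GroupExtension ε.ker G (Multiplicative ℤ) :=
    { inl := ε.ker.subtype
      rightHom := ε
      inl_injective := ε.ker.subtype_injective
      range_inl_eq_ker_rightHom := ε.ker.range_subtype
      rightHom_surjective := hε }
  let splitting : S.Splitting :=
    { zpowersHom G s with
      rightInverse_rightHom := fun m ↦
        calc ε (s ^ m.toAdd)
          _ = Multiplicative.ofAdd 1 ^ m.toAdd := by rw [map_zpow, hs]
          _ = m := by rw [← ofAdd_zsmul, zsmul_one, Int.cast_id, ofAdd_toAdd] }
  obtain ⟨α, hα⟩ := (zpowersHom (MulAut ε.ker)).surjective splitting.conjAct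
  exact ⟨α, ⟨hα ▸ splitting.semidirectProductMulEquiv.symm⟩⟩

theorem IsFinitelyPresented.groupIsFinitelyPresented {G : Type*} [Group G]
    (hG : IsFinitelyPresented G) : Group.IsFinitelyPresented G := by
  obtain ⟨n, R, hR, ⟨e⟩⟩ := hG
  have := hR.to_subtype
  exact .equiv e.symm

/-- If `G` is finitely presented and `ε : G → ℤ` is a surjective
homomorphism whose kernel is locally finite (every finitely generated subgroup of the
kernel is finite), then the kernel is finite: every finitely presented
(locally finite)-by-ℤ group is (finite)-by-ℤ. -/
theorem stmt13 {G : Type*} [Group G] (hfp : IsFinitelyPresented G)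
    (ε : G →* Multiplicative ℤ) (hsurj : Function.Surjective ε)
    (hlf : ∀ H : Subgroup G, H ≤ ε.ker → H.FG → Finite H) :
    Finite ε.ker := by
  have hN : IsLocallyFiniteGroup ε.ker := fun H hH ↦
    have map_fg : (H.map ε.ker.subtype).FG :=
      (Subgroup.fg_iff_submonoid_fg _).2 (((Subgroup.fg_iff_submonoid_fg H).1 hH).map _)
    have := hlf (H.map ε.ker.subtype) (Subgroup.map_subtype_le H) map_fg
    (H.equivMapOfInjective _ ε.ker.subtype_injective).finite_iff.2 this
  obtain ⟨α, ⟨e⟩⟩ := exists_mulEquiv_semidirectProduct_ker hsurj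
  have := hfp.groupIsFinitelyPresented
  have := Group.IsFinitelyPresented.equiv e
  exact hN.finite_of_isFinitelyPresented α
end

section
/- Every finitely generated nilpotent group G is either virtually cyclic or virtually surjects onto ℤ × ℤ: either G has a cyclic subgroup of finite index, or G has a subgroup of finite index admitting a surjective group homomorphism onto ℤ × ℤ. -/
/-!
Induct along the quotients by the center. A homomorphism onto `ℤ × ℤ` from a finite-index subgroup
of `G ⧸ center G` pulls back to `G`. If instead `G ⧸ center G` is virtually cyclic, then `G` has a
finite-index subgroup that is cyclic modulo a central subgroup, hence abelian; it is again finitely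
generated, so it is `ℤⁿ × finite`, and the two alternatives correspond to `n ≤ 1` and `n ≥ 2`.
-/

open Function Subgroup
open scoped IsMulCommutative

/-- A group is virtually cyclic if it has a cyclic subgroup of finite index, possibly a finite one:
finite groups are virtually cyclic. This is the first alternative of the dichotomy. -/
def IsVirtuallyCyclic (G : Type*) [Group G] : Prop :=
  ∃ H : Subgroup G, H.FiniteIndex ∧ IsCyclic H

/-- `G` virtually surjects onto `Q` if some finite-index subgroup of `G` admits a surjective
homomorphism onto `Q`. The second alternative of the dichotomy is the case `Q = ℤ × ℤ`; allowing
arbitrary `Q` makes the relation transitive. -/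
def VirtuallySurjects (G Q : Type*) [Group G] [Group Q] : Prop :=
  ∃ H : Subgroup G, H.FiniteIndex ∧ ∃ f : H →* Q, Surjective f

section

variable {G G' Q : Type*} [Group G] [Group G'] [Group Q]

instance finiteIndex_comap (f : G →* G') (H : Subgroup G') [H.FiniteIndex] :
    (H.comap f).FiniteIndex where
  index_ne_zero := by
    rw [index_comap]
    exact isFiniteRelIndex_of_finiteIndex.relIndex_ne_zero

instance finiteIndex_map_subtype (K : Subgroup G) [K.FiniteIndex] (H : Subgroup K)
    [H.FiniteIndex] : (H.map K.subtype).FiniteIndex where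
  index_ne_zero := by
    rw [index_map_subtype]
    exact mul_ne_zero FiniteIndex.index_ne_zero FiniteIndex.index_ne_zero

namespace IsVirtuallyCyclic

theorem of_finiteIndex (K : Subgroup G) [K.FiniteIndex] (hK : IsVirtuallyCyclic K) :
    IsVirtuallyCyclic G := by
  obtain ⟨H, _, _⟩ := hK
  exact ⟨H.map K.subtype, inferInstance,
    (H.equivMapOfInjective K.subtype K.subtype_injective).isCyclic.mp inferInstance⟩

theorem of_injective (hG' : IsVirtuallyCyclic G') (f : G →* G') (hf : Injective f) :
    IsVirtuallyCyclic G := by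
  obtain ⟨H, _, _⟩ := hG'
  refine ⟨H.comap f, inferInstance, isCyclic_of_injective (f.subgroupComap H) fun x y hxy ↦ ?_⟩
  exact Subtype.ext (hf (congrArg Subtype.val hxy))

theorem prod_finite (A T : Type*) [Group A] [IsCyclic A] [Group T] [Finite T] :
    IsVirtuallyCyclic (A × T) := by
  refine ⟨(MonoidHom.snd A T).ker, inferInstance,
    isCyclic_of_injective ((MonoidHom.fst A T).comp (Subgroup.subtype _)) ?_⟩
  rintro ⟨x, hx : x.2 = 1⟩ ⟨y, hy : y.2 = 1⟩ (hxy : x.1 = y.1)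
  exact Subtype.ext (Prod.ext hxy (hx.trans hy.symm))

theorem exists_finiteIndex_isMulCommutative_of_ker_le_center (hG' : IsVirtuallyCyclic G')
    (f : G →* G') (hf : f.ker ≤ center G) :
    ∃ K : Subgroup G, K.FiniteIndex ∧ IsMulCommutative K := by
  obtain ⟨H, _, _⟩ := hG'
  refine ⟨H.comap f, inferInstance,
    (f.subgroupComap H).isMulCommutative_of_isCyclic_of_ker_le_center fun x hx ↦ ?_⟩
  have hx_center : (x : G) ∈ center G := hf (congrArg Subtype.val hx)
  exact mem_center_iff.mpr fun y ↦ Subtype.ext (mem_center_iff.mp hx_center y)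

end IsVirtuallyCyclic

namespace VirtuallySurjects

theorem of_surjective (f : G →* Q) (hf : Surjective f) : VirtuallySurjects G Q :=
  ⟨⊤, inferInstance, f.comp (topEquiv (G := G)).toMonoidHom, hf.comp topEquiv.surjective⟩

theorem of_finiteIndex (K : Subgroup G) [K.FiniteIndex] : VirtuallySurjects G K :=
  ⟨K, inferInstance, MonoidHom.id K, surjective_id⟩

theorem trans (hG : VirtuallySurjects G G') (hG' : VirtuallySurjects G' Q) :
    VirtuallySurjects G Q := by
  obtain ⟨K, _, f, hf⟩ := hG
  obtain ⟨H, _, g, hg⟩ := hG'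
  let e := (H.comap f).equivMapOfInjective K.subtype K.subtype_injective
  refine ⟨(H.comap f).map K.subtype, inferInstance,
    (g.comp (f.subgroupComap H)).comp e.symm.toMonoidHom, ?_⟩
  exact (hg.comp (f.subgroupComap_surjective_of_surjective H hf)).comp e.symm.surjective

end VirtuallySurjects

end

section Pi

variable {ι : Type*} (M : ι → Type*)

theorem isCyclic_pi_of_subsingleton [Subsingleton ι] [∀ i, Group (M i)] [∀ i, IsCyclic (M i)] :
    IsCyclic (∀ i, M i) := by
  rcases isEmpty_or_nonempty ι with _ | ⟨⟨a⟩⟩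
  · infer_instance
  · refine isCyclic_of_injective (Pi.evalMonoidHom M a) fun x y hxy ↦ funext fun i ↦ ?_
    exact Subsingleton.elim a i ▸ hxy

theorem evalMonoidHom_prod_surjective [∀ i, MulOneClass (M i)] {a b : ι} (hab : a ≠ b) :
    Surjective ((Pi.evalMonoidHom M a).prod (Pi.evalMonoidHom M b)) := by
  classical
  rintro ⟨u, v⟩
  refine ⟨update (update 1 a u) b v, Prod.ext ?_ ?_⟩
  · simp [hab]
  · simp

end Pi

theorem isVirtuallyCyclic_or_exists_surjective_int_prod_int_of_commGroup (G : Type*) [CommGroup G]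
    [Group.FG G] :
    IsVirtuallyCyclic G ∨ ∃ f : G →* Multiplicative (ℤ × ℤ), Surjective f := by
  obtain ⟨κ, ι, _, _, p, hp, n, ⟨e⟩⟩ := CommGroup.equiv_free_prod_prod_multiplicative_zmod G
  rcases subsingleton_or_nontrivial ι with _ | _
  · have : IsCyclic (ι → Multiplicative ℤ) := isCyclic_pi_of_subsingleton _
    have (i : κ) : NeZero (p i ^ n i) := ⟨pow_ne_zero _ (hp i).ne_zero⟩
    have (i : κ) : Finite (Multiplicative (ZMod (p i ^ n i))) :=
      inferInstanceAs (Finite (ZMod (p i ^ n i)))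
    exact .inl ((IsVirtuallyCyclic.prod_finite _ _).of_injective e.toMonoidHom e.injective)
  · obtain ⟨a, b, hab⟩ := exists_pair_ne ι
    let coords : (ι → Multiplicative ℤ) →* Multiplicative ℤ × Multiplicative ℤ :=
      (Pi.evalMonoidHom _ a).prod (Pi.evalMonoidHom _ b)
    let toFree : G →* (ι → Multiplicative ℤ) := (MonoidHom.fst _ _).comp e.toMonoidHom
    have hcoords : Surjective coords := evalMonoidHom_prod_surjective _ hab
    have htoFree : Surjective toFree := Prod.fst_surjective.comp e.surjective
    exact .inr ⟨(MulEquiv.prodMultiplicative ℤ ℤ).symm.toMonoidHom.comp (coords.comp toFree),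
      (MulEquiv.prodMultiplicative ℤ ℤ).symm.surjective.comp (hcoords.comp htoFree)⟩

theorem isVirtuallyCyclic_or_virtuallySurjects_of_ker_le_center {G G' : Type*} [Group G]
    [Group.FG G] [Group G'] (f : G →* G') (hf : Surjective f) (hker : f.ker ≤ center G)
    (hG' : IsVirtuallyCyclic G' ∨ VirtuallySurjects G' (Multiplicative (ℤ × ℤ))) :
    IsVirtuallyCyclic G ∨ VirtuallySurjects G (Multiplicative (ℤ × ℤ)) := by
  rcases hG' with hcyclic | hsurj
  · obtain ⟨K, _, _⟩ := hcyclic.exists_finiteIndex_isMulCommutative_of_ker_le_center f hker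
    rcases isVirtuallyCyclic_or_exists_surjective_int_prod_int_of_commGroup K with hK | ⟨g, hg⟩
    · exact .inl (.of_finiteIndex K hK)
    · exact .inr ((VirtuallySurjects.of_finiteIndex K).trans (.of_surjective g hg))
  · exact .inr ((VirtuallySurjects.of_surjective f hf).trans hsurj)

/-- Every finitely generated nilpotent group is either virtually
cyclic (it has a cyclic subgroup of finite index) or virtually surjects onto `ℤ × ℤ`
(it has a finite-index subgroup admitting a surjective homomorphism onto `ℤ × ℤ`). -/
theorem stmt14 {G : Type*} [Group G] [Group.FG G] [Group.IsNilpotent G] :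
    (∃ H : Subgroup G, H.index ≠ 0 ∧ IsCyclic H) ∨
    (∃ H : Subgroup G, H.index ≠ 0 ∧
      ∃ f : H →* Multiplicative (ℤ × ℤ), Function.Surjective f) := by
  suffices h : Group.FG G → IsVirtuallyCyclic G ∨ VirtuallySurjects G (Multiplicative (ℤ × ℤ)) by
    simpa only [IsVirtuallyCyclic, VirtuallySurjects, finiteIndex_iff] using h inferInstance
  refine Group.nilpotent_center_quotient_ind (P := fun G [Group G] _ ↦ Group.FG G →
    IsVirtuallyCyclic G ∨ VirtuallySurjects G (Multiplicative (ℤ × ℤ))) G ?_ ?_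
  · intro G _ _ _
    exact .inl ⟨⊤, inferInstance, inferInstance⟩
  · intro G _ _ ih _
    exact isVirtuallyCyclic_or_virtuallySurjects_of_ker_le_center (QuotientGroup.mk' (center G))
      (QuotientGroup.mk'_surjective _) (QuotientGroup.ker_mk' _).le (ih inferInstance)
end

section
/- Let Γ be a connected, locally finite simple graph with infinitely many vertices V. Then one can choose for every vertex v a proper ray r_v : ℕ → V starting at v — that is, r_v 0 = v, consecutive vertices r_v n and r_v (n+1) are adjacent in Γ, and for every finite K ⊆ V the set {n | r_v n ∈ K} is finite — such that the family is locally finite: for every finite K ⊆ V, the set of vertices v for which the image of r_v meets K is finite. -/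
/-! If `K` is a finite set of vertices, only finitely many components of `Γ - K` exist, so all but
finitely many vertices lie in an infinite one, and Kőnig's lemma gives such a vertex a ray that
avoids `K`. Enumerate the vertices and exhaust them by finite sets `K₀ ⊆ K₁ ⊆ ⋯`. The ray chosen
for the `i`-th vertex avoids the largest `Kₙ` with `n < i` that some ray from that vertex avoids.
A given `Kₙ` is then met only by the rays of the vertices with index at most `n` and of the
finitely many vertices from which no ray avoids `Kₙ`. -/

section

open Filter Set SimpleGraph

section Selection

variable {ι β : Type*}

theorem exists_mem_forall_lt_mem_of_antitone {S : Set β} (hS : S.Nonempty) {U : ℕ → Set β}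
    (hU : Antitone U) (k : ℕ) : ∃ x ∈ S, ∀ n < k, (S ∩ U n).Nonempty → x ∈ U n := by
  induction k with
  | zero => exact hS.imp fun _ hx => ⟨hx, fun n hn => absurd hn n.not_lt_zero⟩
  | succ k ih =>
    by_cases h : (S ∩ U k).Nonempty
    · obtain ⟨x, hxS, hxU⟩ := h
      exact ⟨x, hxS, fun n hn _ => hU (Nat.le_of_lt_succ hn) hxU⟩
    · obtain ⟨x, hxS, hx⟩ := ih
      refine ⟨x, hxS, fun n hn hne => ?_⟩
      obtain hn | rfl := Nat.lt_succ_iff_lt_or_eq.mp hn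
      exacts [hx n hn hne, absurd hne h]

theorem exists_forall_mem_tendsto_cofinite [Countable ι] {l : Filter β} [l.IsCountablyGenerated]
    {S : ι → Set β} (hS : ∀ i, (S i).Nonempty)
    (hl : ∀ U ∈ l, ∀ᶠ i in cofinite, (S i ∩ U).Nonempty) :
    ∃ f : ι → β, (∀ i, f i ∈ S i) ∧ Tendsto f cofinite l := by
  obtain ⟨U, hU⟩ := l.exists_antitone_basis
  obtain ⟨e, he⟩ := exists_injective_nat ι
  choose f hfS hfU using fun i => exists_mem_forall_lt_mem_of_antitone (hS i) hU.antitone (e i)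
  have he_tendsto : Tendsto e cofinite atTop := Nat.cofinite_eq_atTop ▸ he.tendsto_cofinite
  refine ⟨f, hfS, hU.tendsto_right_iff.mpr fun n _ => ?_⟩
  filter_upwards [he_tendsto.eventually_gt_atTop n, hl (U n) (hU.mem n)] with i hn hne
  exact hfU i n hn hne

theorem isCountablyGenerated_smallSets_cofinite [Countable β] :
    (cofinite : Filter β).smallSets.IsCountablyGenerated :=
  HasCountableBasis.isCountablyGenerated ⟨hasBasis_cofinite.smallSets, Countable.ofPred_finite⟩

end Selection

variable {V W : Type*} {G : SimpleGraph V} {H : SimpleGraph W}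

section Countable

theorem countable_setOf_exists_walk_length_eq (hG : ∀ v, (G.neighborSet v).Countable)
    (n : ℕ) (v : V) : {u | ∃ p : G.Walk v u, p.length = n}.Countable := by
  induction n generalizing v with
  | zero =>
    refine (countable_singleton v).mono ?_
    rintro u ⟨p, hp⟩
    exact (Walk.eq_of_length_eq_zero hp).symm
  | succ n ih =>
    refine ((hG v).biUnion fun w _ => ih w).mono ?_
    rintro u ⟨_ | ⟨hvw, q⟩, hp⟩
    · simp at hp
    · exact mem_biUnion hvw ⟨q, Nat.succ_injective hp⟩

theorem countable_of_preconnected (hG : G.Preconnected)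
    (hcount : ∀ v, (G.neighborSet v).Countable) : Countable V := by
  cases isEmpty_or_nonempty V with
  | inl _ => infer_instance
  | inr hne =>
    obtain ⟨o⟩ := hne
    refine countable_univ_iff.mp ?_
    refine (countable_iUnion fun n => countable_setOf_exists_walk_length_eq hcount n o).mono ?_
    intro u _
    obtain ⟨p⟩ := hG o u
    exact mem_iUnion.mpr ⟨p.length, p, rfl⟩

end Countable

section GeodesicOrder

theorem exists_adj_dist_eq_succ {a b : V} (hab : G.Reachable a b) (hne : a ≠ b) :
    ∃ x, G.Adj a x ∧ G.Reachable x b ∧ G.dist a b = G.dist x b + 1 := by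
  obtain ⟨p, hp⟩ := hab.exists_walk_length_eq_dist
  cases p with
  | nil => exact absurd rfl hne
  | @cons _ x _ hax q =>
    have h_le : G.dist x b ≤ q.length := dist_le q
    have h_triangle := hax.reachable.dist_triangle_left b
    rw [dist_eq_one_iff_adj.mpr hax] at h_triangle
    rw [Walk.length_cons] at hp
    exact ⟨x, hax, q.reachable, by lia⟩

/-- The geodesic order of `G` rooted at `o`: `a ≤ b` when `b` can be reached from `a` and `a` lies
on a shortest path from `o` to `b`. Reachability is required separately because `SimpleGraph.dist`
is `0` between different components. Kőnig's lemma applied to this order yields geodesic rays. -/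
@[reducible]
def geodesicOrder (G : SimpleGraph V) (o : V) : PartialOrder V where
  le a b := G.Reachable a b ∧ G.dist o a + G.dist a b = G.dist o b
  le_refl a := ⟨.refl a, by simp⟩
  le_trans a b c hab hbc := by
    refine ⟨hab.1.trans hbc.1, ?_⟩
    have h_ac := hab.1.dist_triangle_left c
    have h_oc := (hab.1.trans hbc.1).dist_triangle_right o
    lia
  le_antisymm a b hab hba := hab.1.dist_eq_zero_iff.mp (by lia)

variable {o a b : V}

theorem dist_lt_dist_of_geodesicOrder_lt (h : (geodesicOrder G o).lt a b) :
    G.dist o a < G.dist o b := by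
  let := geodesicOrder G o
  have hab : a ≤ b := le_of_lt h
  have h_pos := hab.1.pos_dist_of_ne (ne_of_lt h)
  have h_eq := hab.2
  lia

theorem exists_adj_covBy_geodesicOrder (h : (geodesicOrder G o).lt a b) :
    letI := geodesicOrder G o
    ∃ x, G.Adj a x ∧ a ⋖ x ∧ x ≤ b := by
  let := geodesicOrder G o
  have hab : a ≤ b := le_of_lt h
  obtain ⟨x, hax, hxb, h_dist⟩ := exists_adj_dist_eq_succ hab.1 (ne_of_lt h)
  have h_dist_ax := dist_eq_one_iff_adj.mpr hax
  have h_ox := hax.reachable.dist_triangle_right o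
  have h_ob := hxb.dist_triangle_right o
  have h_eq := hab.2
  have ha_le : a ≤ x := ⟨hax.reachable, by lia⟩
  have hx_le : x ≤ b := ⟨hxb, by lia⟩
  refine ⟨x, hax, ⟨lt_of_le_of_ne ha_le hax.ne, fun y hay hyx => ?_⟩, hx_le⟩
  have h_lt_y := dist_lt_dist_of_geodesicOrder_lt hay
  have h_lt_x := dist_lt_dist_of_geodesicOrder_lt hyx
  lia

theorem isStronglyAtomic_geodesicOrder (G : SimpleGraph V) (o : V) :
    letI := geodesicOrder G o
    IsStronglyAtomic V := by
  let := geodesicOrder G o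
  refine ⟨fun a b hab => ?_⟩
  obtain ⟨x, -, hx⟩ := exists_adj_covBy_geodesicOrder hab
  exact ⟨x, hx⟩

theorem adj_of_covBy_geodesicOrder (h : letI := geodesicOrder G o; a ⋖ b) : G.Adj a b := by
  let := geodesicOrder G o
  obtain ⟨x, hax, hx, hxb⟩ := exists_adj_covBy_geodesicOrder h.lt
  have hx_eq : x = b := hxb.eq_of_not_lt fun hxb_lt => h.2 hx.lt hxb_lt
  exact hx_eq ▸ hax

end GeodesicOrder

/-- A ray of `G`: a one-way infinite path. The vertices are required to be distinct, which makes
the ray proper. -/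
structure IsRay (G : SimpleGraph V) (r : ℕ → V) : Prop where
  adj : ∀ n, G.Adj (r n) (r (n + 1))
  injective : Function.Injective r

theorem IsRay.map {r : ℕ → V} (hr : IsRay G r) (f : G ↪g H) : IsRay H (f ∘ r) :=
  ⟨fun n => f.map_adj_iff.mpr (hr.adj n), f.injective.comp hr.injective⟩

theorem exists_isRay_of_infinite_supp (hG : ∀ v, (G.neighborSet v).Finite) {v : V}
    (hv : (G.connectedComponentMk v).supp.Infinite) : ∃ r, r 0 = v ∧ IsRay G r := by
  let := geodesicOrder G v
  have := isStronglyAtomic_geodesicOrder G v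
  have h_covBy (a : V) : {x | a ⋖ x}.Finite := (hG a).subset fun _ => adj_of_covBy_geodesicOrder
  have h_Ici : (Ici v).Infinite :=
    hv.mono fun u hu => ⟨(ConnectedComponent.exact hu).symm, by simp⟩
  obtain ⟨r, hr0, hr⟩ := exists_orderEmbedding_covby_of_forall_covby_finite h_covBy h_Ici
  exact ⟨r, hr0, fun n => adj_of_covBy_geodesicOrder (hr n), r.injective⟩

theorem exists_isRay_range_subset (hG : ∀ v, (G.neighborSet v).Finite) {s : Set V} {v : s}
    (hv : ((G.induce s).connectedComponentMk v).supp.Infinite) :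
    ∃ r : ℕ → V, r 0 = v ∧ IsRay G r ∧ range r ⊆ s := by
  have h_induce (w : s) : ((G.induce s).neighborSet w).Finite :=
    (hG w).preimage Subtype.val_injective.injOn
  obtain ⟨r, rfl, hr⟩ := exists_isRay_of_infinite_supp h_induce hv
  exact ⟨_, rfl, hr.map (Embedding.induce s), range_subset_iff.mpr fun n => (r n).2⟩

theorem eventually_exists_isRay_range_subset_compl [G.LocallyFinite] (hG : G.Preconnected)
    {K : Set V} (hK : K.Finite) :
    ∀ᶠ v in cofinite, ∃ r, r 0 = v ∧ IsRay G r ∧ range r ⊆ Kᶜ := by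
  lift K to Finset V using hK
  have : Fact G.Preconnected := ⟨hG⟩
  let F : Set (G.ComponentCompl K) := {C | (ConnectedComponent.supp C).Finite}
  have hF : (⋃ C ∈ F, Subtype.val '' ConnectedComponent.supp C).Finite :=
    F.toFinite.biUnion fun C hC => hC.image _
  filter_upwards [K.finite_toSet.compl_mem_cofinite, hF.compl_mem_cofinite] with v hvK hvF
  refine exists_isRay_range_subset (v := ⟨v, hvK⟩)
    (fun w => (G.neighborSet w).toFinite) fun hfin => hvF ?_
  exact mem_biUnion hfin ⟨⟨v, hvK⟩, rfl, rfl⟩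

theorem exists_isRay_of_preconnected [Infinite V] (hG : G.Preconnected)
    (hfin : ∀ v, (G.neighborSet v).Finite) (v : V) : ∃ r, r 0 = v ∧ IsRay G r := by
  refine exists_isRay_of_infinite_supp hfin ?_
  have h_supp : (G.connectedComponentMk v).supp = univ :=
    eq_univ_of_forall fun u => ConnectedComponent.sound (hG u v)
  exact h_supp ▸ infinite_univ

theorem exists_isRay_tendsto_range_smallSets [Infinite V] [G.LocallyFinite]
    (hG : G.Preconnected) :
    ∃ r : V → ℕ → V, (∀ v, r v 0 = v ∧ IsRay G (r v)) ∧
      Tendsto (fun v => range (r v)) cofinite cofinite.smallSets := by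
  have hfin (v : V) : (G.neighborSet v).Finite := toFinite _
  have : Countable V := countable_of_preconnected hG fun v => (hfin v).countable
  have := isCountablyGenerated_smallSets_cofinite (β := V)
  have h_avoid : ∀ U ∈ comap range (cofinite : Filter V).smallSets,
      ∀ᶠ v in cofinite, ({r | r 0 = v ∧ IsRay G r} ∩ U).Nonempty := by
    rintro U ⟨T, hT, hTU⟩
    obtain ⟨K, hK, hKT⟩ := hasBasis_cofinite.smallSets.mem_iff.mp hT
    filter_upwards [eventually_exists_isRay_range_subset_compl hG hK]
    rintro v ⟨r, hr0, hr, hrK⟩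
    exact ⟨r, ⟨hr0, hr⟩, hTU (hKT hrK)⟩
  obtain ⟨r, hr, hr_tendsto⟩ :=
    exists_forall_mem_tendsto_cofinite (exists_isRay_of_preconnected hG hfin) h_avoid
  exact ⟨r, hr, (tendsto_comap (f := range)).comp hr_tendsto⟩

end

/-- In a connected, locally finite graph with infinitely many
vertices, one can choose for every vertex `v` a proper ray `r v` starting at `v`, such
that the family is locally finite: every finite set of vertices is met by the images of
only finitely many of the rays. -/
theorem stmt19 {V : Type*} [Infinite V] (Γ : SimpleGraph V)
    (hconn : Γ.Connected) (hlf : Γ.LocallyFinite) :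
    ∃ r : V → ℕ → V,
      (∀ v, r v 0 = v) ∧
      (∀ v n, Γ.Adj (r v n) (r v (n + 1))) ∧
      (∀ (v : V) (K : Set V), K.Finite → {n | r v n ∈ K}.Finite) ∧
      (∀ K : Set V, K.Finite → {v | ∃ n, r v n ∈ K}.Finite) := by
  obtain ⟨r, hr, hr_tendsto⟩ := exists_isRay_tendsto_range_smallSets hconn.preconnected
  refine ⟨r, fun v => (hr v).1, fun v => (hr v).2.adj,
    fun v K hK => hK.preimage (hr v).2.injective.injOn, fun K hK => ?_⟩
  have h_avoid : ∀ᶠ v in Filter.cofinite, Set.range (r v) ⊆ Kᶜ :=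
    Filter.tendsto_smallSets_iff.mp hr_tendsto Kᶜ hK.compl_mem_cofinite
  exact Set.Finite.subset h_avoid fun v ⟨n, hn⟩ h_subset => h_subset ⟨n, rfl⟩ hn
end
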